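/- The square root of the tangent-point energy is globally Lipschitz continuous with respect to the geodesic distance of G: with p = 2s + 1, for all γ₀, γ₁ ∈ 𝓜 one has |√(E(γ₁)) − √(E(γ₀))| ≤ √(1 + p/4) · d_G(γ₁, γ₀). In particular, E is bounded on every G-bounded subset of 𝓜. -/

import Mathlib

open MeasureTheory Real Filter Set
open scoped ENNReal Topology RealInnerProductSpace

noncomputable section

/-- Euclidean space `ℝⁿ`. -/
abbrev En (n : ℕ) : Type := EuclideanSpace ℝ (Fin n)

/-- A fundamental domain for the circle `𝕋 = ℝ/ℤ`. -/
def I01 : Set ℝ := Set.Ico (0 : ℝ) 1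

/-- The intrinsic distance on `𝕋 = ℝ/ℤ`, expressed for real representatives. -/
def dT (x y : ℝ) : ℝ := ⨅ k : ℤ, |x - y - (k : ℝ)|

/-- Supremum norm of a (periodic) function on the circle. -/
def supNorm {E : Type*} [NormedAddCommGroup E] (f : ℝ → E) : ℝ := ⨆ x : ℝ, ‖f x‖

/-- The squared Gagliardo seminorm `[v]_{H^σ}²` of a function on the circle, valued in `[0,∞]`. -/
def gagliardoSqE {E : Type*} [NormedAddCommGroup E] (σ : ℝ) (v : ℝ → E) : ℝ≥0∞ :=
  ∫⁻ x in I01, ∫⁻ y in I01, ENNReal.ofReal (‖v y - v x‖ ^ 2 / dT x y ^ (2 * σ + 1))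

/-- Membership in the Sobolev–Slobodeckij space `H^s(𝕋, ℝⁿ)`; for `s ∈ (3/2,2)` such
functions have a `C¹` representative, which we take as the defining data. -/
def InHs {n : ℕ} (s : ℝ) (u : ℝ → En n) : Prop :=
  Function.Periodic u 1 ∧ ContDiff ℝ 1 u ∧ gagliardoSqE (s - 1) (deriv u) < ⊤

/-- The squared `H^s` norm `‖u‖²_{L²} + ‖u'‖²_{L²} + [u']²_{H^{s-1}}`. -/
def HsNormSq {n : ℕ} (s : ℝ) (u : ℝ → En n) : ℝ :=
  (∫ x in I01, ‖u x‖ ^ 2) + (∫ x in I01, ‖deriv u x‖ ^ 2) +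
    (gagliardoSqE (s - 1) (deriv u)).toReal

/-- The `H^s` norm. -/
def HsNorm {n : ℕ} (s : ℝ) (u : ℝ → En n) : ℝ := Real.sqrt (HsNormSq s u)

/-- The `H^s` inner product. -/
def HsInner {n : ℕ} (s : ℝ) (u v : ℝ → En n) : ℝ :=
  (∫ x in I01, ⟪u x, v x⟫) + (∫ x in I01, ⟪deriv u x, deriv v x⟫) +
    ∫ x in I01, ∫ y in I01,
      ⟪deriv u y - deriv u x, deriv v y - deriv v x⟫ / dT x y ^ (2 * (s - 1) + 1)

/-- The manifold `𝓜` of embedded closed curves of class `H^s`: injective (on the circle)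
immersions. -/
def InM {n : ℕ} (s : ℝ) (γ : ℝ → En n) : Prop :=
  InHs s γ ∧ Set.InjOn γ I01 ∧ ∀ x, deriv γ x ≠ 0

/-- The length `L(γ)`. -/
def arcLen {n : ℕ} (γ : ℝ → En n) : ℝ := ∫ x in I01, ‖deriv γ x‖

/-- The arc-length distance `d_γ(x,y)`: the length of the shorter of the two arcs of `γ`
between `x` and `y`. -/
def arcDist {n : ℕ} (γ : ℝ → En n) (x y : ℝ) : ℝ :=
  ⨅ k : ℤ, |∫ t in x..(y + (k : ℝ)), ‖deriv γ t‖|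

/-- Derivative with respect to arc length, `D_γ u = u' / |γ'|`. -/
def Dg {n : ℕ} (γ u : ℝ → En n) (x : ℝ) : En n := ‖deriv γ x‖⁻¹ • deriv u x

/-- `𝒟_γ u (x)`, the pointwise linear map `w ↦ |γ'(x)|⁻² ⟪γ'(x), w⟫ u'(x)`. -/
def DDg {n : ℕ} (γ u : ℝ → En n) (x : ℝ) (w : En n) : En n :=
  ((‖deriv γ x‖ ^ 2)⁻¹ * ⟪deriv γ x, w⟫) • deriv u x

/-- The operator `R^s_γ`. -/
def Rop {n : ℕ} (s : ℝ) (γ u : ℝ → En n) (x y : ℝ) : En n :=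
  (‖γ y - γ x‖ ^ s)⁻¹ • (u y - u x - DDg γ u x (γ y - γ x))

/-- Density of the measure `μ_γ` with respect to `λ ⊗ λ` on `𝕋 × 𝕋`. -/
def muW {n : ℕ} (γ : ℝ → En n) (x y : ℝ) : ℝ :=
  ‖deriv γ x‖ * ‖deriv γ y‖ / ‖γ y - γ x‖

/-- Density of the measure `ν_γ` with respect to `λ ⊗ λ` on `𝕋 × 𝕋`. -/
def nuW {n : ℕ} (γ : ℝ → En n) (x y : ℝ) : ℝ :=
  ‖deriv γ x‖ * ‖deriv γ y‖ / arcDist γ x y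

/-- The tangent-point energy, valued in `[0,∞]`. -/
def EtpE {n : ℕ} (s : ℝ) (γ : ℝ → En n) : ℝ≥0∞ :=
  ∫⁻ x in I01, ∫⁻ y in I01, ENNReal.ofReal (‖Rop s γ γ x y‖ ^ 2 * muW γ x y)

/-- The tangent-point energy, real-valued (finite on `𝓜`). -/
def Etp {n : ℕ} (s : ℝ) (γ : ℝ → En n) : ℝ := (EtpE s γ).toReal

/-- `‖R^s_γ u‖²_{L²(ν_γ)}`, valued in `[0,∞]`. -/
def RnuSqE {n : ℕ} (s : ℝ) (γ u : ℝ → En n) : ℝ≥0∞ :=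
  ∫⁻ x in I01, ∫⁻ y in I01, ENNReal.ofReal (‖Rop s γ u x y‖ ^ 2 * nuW γ x y)

/-- `‖R^s_γ u‖²_{L²(ν_γ)}`, real-valued. -/
def RnuSq {n : ℕ} (s : ℝ) (γ u : ℝ → En n) : ℝ := (RnuSqE s γ u).toReal

/-- The squared `γ`-dependent seminorm `[u]²_{H^s(γ)}`, valued in `[0,∞]`. -/
def gagGammaSqE {n : ℕ} (s : ℝ) (γ u : ℝ → En n) : ℝ≥0∞ :=
  ∫⁻ x in I01, ∫⁻ y in I01,
    ENNReal.ofReal (‖Dg γ u y - Dg γ u x‖ ^ 2 / arcDist γ x y ^ (2 * (s - 1)) * nuW γ x y)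

/-- The squared `γ`-dependent seminorm `[u]²_{H^s(γ)}`, real-valued. -/
def gagGammaSq {n : ℕ} (s : ℝ) (γ u : ℝ → En n) : ℝ := (gagGammaSqE s γ u).toReal

/-- The inner product `⟨u,v⟩_{L²(γ)}`. -/
def innerL2g {n : ℕ} (γ u v : ℝ → En n) : ℝ := ∫ x in I01, ⟪u x, v x⟫ * ‖deriv γ x‖

/-- The inner product `⟨u,v⟩_{H¹(γ)}`. -/
def innerH1g {n : ℕ} (γ u v : ℝ → En n) : ℝ :=
  ∫ x in I01, ⟪Dg γ u x, Dg γ v x⟫ * ‖deriv γ x‖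

/-- The squared `γ`-dependent norm `‖u‖²_{H^s(γ)}`. -/
def HsGammaNormSq {n : ℕ} (s : ℝ) (γ u : ℝ → En n) : ℝ :=
  innerL2g γ u u + innerH1g γ u u + gagGammaSq s γ u

/-- The `γ`-dependent norm `‖u‖_{H^s(γ)}`. -/
def HsGammaNorm {n : ℕ} (s : ℝ) (γ u : ℝ → En n) : ℝ := Real.sqrt (HsGammaNormSq s γ u)

/-- The bilinear form `B¹_γ`. -/
def B1 {n : ℕ} (s : ℝ) (γ u v : ℝ → En n) : ℝ :=
  ∫ x in I01, ∫ y in I01, ⟪Rop s γ u x y, Rop s γ v x y⟫ * muW γ x y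

/-- The bilinear form `B²_γ`. -/
def B2 {n : ℕ} (s : ℝ) (γ u v : ℝ → En n) : ℝ :=
  ∫ x in I01, ∫ y in I01,
    ‖Rop s γ γ x y‖ ^ 2 * (⟪u y - u x, v y - v x⟫ / ‖γ y - γ x‖ ^ 2) * muW γ x y

/-- The bilinear form `B³_γ`. -/
def B3 {n : ℕ} (s : ℝ) (γ u v : ℝ → En n) : ℝ :=
  ∫ x in I01, ∫ y in I01,
    ‖Rop s γ γ x y‖ ^ 2 * (⟪Dg γ u x, Dg γ v x⟫ + ⟪Dg γ u y, Dg γ v y⟫) * muW γ x y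

/-- The Riemannian metric `G_γ(u,v)`. -/
def Gmet {n : ℕ} (s : ℝ) (γ u v : ℝ → En n) : ℝ :=
  2 * B1 s γ u v + (2 * s + 1) * B2 s γ u v + B3 s γ u v + innerH1g γ u v + innerL2g γ u v

/-- The distortion `distor(γ) = sup_{x ≠ y} d_γ(x,y)/|γ(y) − γ(x)|`, valued in `[0,∞]`. -/
def distorE {n : ℕ} (γ : ℝ → En n) : ℝ≥0∞ :=
  ⨆ (x ∈ I01) (y ∈ I01) (_ : x ≠ y), ENNReal.ofReal (arcDist γ x y / ‖γ y - γ x‖)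

/-- The distortion, real-valued. -/
def distor {n : ℕ} (γ : ℝ → En n) : ℝ := (distorE γ).toReal

/-- A `C¹` path `[0,1] → 𝓜 ⊂ H^s(𝕋,ℝⁿ)` (with respect to the `H^s` topology), recorded
together with its velocity field `V`. -/
structure C1Path (s : ℝ) (n : ℕ) where
  Γ : ℝ → ℝ → En n
  V : ℝ → ℝ → En n
  mem : ∀ t ∈ Set.Icc (0 : ℝ) 1, InM s (Γ t)
  memV : ∀ t ∈ Set.Icc (0 : ℝ) 1, InHs s (V t)
  isDeriv : ∀ t ∈ Set.Icc (0 : ℝ) 1,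
    Tendsto (fun h : ℝ => HsNorm s fun x => h⁻¹ • (Γ (t + h) x - Γ t x) - V t x)
      (𝓝[{h : ℝ | t + h ∈ Set.Icc (0 : ℝ) 1 ∧ h ≠ 0}] 0) (𝓝 0)
  contV : ∀ t ∈ Set.Icc (0 : ℝ) 1,
    Tendsto (fun τ : ℝ => HsNorm s fun x => V τ x - V t x) (𝓝[Set.Icc (0 : ℝ) 1] t) (𝓝 0)

/-- Length of a path with respect to `G`. -/
def pathLen {s : ℝ} {n : ℕ} (P : C1Path s n) : ℝ :=
  ∫ t in (0 : ℝ)..1, Real.sqrt (Gmet s (P.Γ t) (P.V t) (P.V t))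

/-- The path (Dirichlet) energy of a path with respect to `G`. -/
def pathEnergy {s : ℝ} {n : ℕ} (P : C1Path s n) : ℝ :=
  (1 / 2) * ∫ t in (0 : ℝ)..1, Gmet s (P.Γ t) (P.V t) (P.V t)

/-- The geodesic distance induced by `G`, valued in `[0,∞]` (`∞` if there is no path). -/
def geodDist (s : ℝ) {n : ℕ} (γ₀ γ₁ : ℝ → En n) : ℝ≥0∞ :=
  ⨅ (P : C1Path s n) (_ : P.Γ 0 = γ₀ ∧ P.Γ 1 = γ₁), ENNReal.ofReal (pathLen P)

/-- `U ⊆ 𝓜` is bounded with respect to the geodesic distance `d_G`. -/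
def GBounded (s : ℝ) {n : ℕ} (U : Set (ℝ → En n)) : Prop :=
  (∀ γ ∈ U, InM s γ) ∧
    ∃ γ₀, InM s γ₀ ∧ ∃ R : ℝ, ∀ γ ∈ U, geodDist s γ γ₀ ≤ ENNReal.ofReal R

/-- Weak convergence in the Hilbert space `H^s(𝕋,ℝⁿ)`. -/
def WeakHsTendsto {n : ℕ} (s : ℝ) (γk : ℕ → ℝ → En n) (γ : ℝ → En n) : Prop :=
  ∀ v : ℝ → En n, InHs s v →
    Tendsto (fun k => HsInner s (γk k) v) atTop (𝓝 (HsInner s γ v))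

/-- Directional derivative of `γ ↦ G_γ(u,v)` at `γ` in direction `w`. -/
def DGdir {n : ℕ} (s : ℝ) (γ w u v : ℝ → En n) : ℝ :=
  deriv (fun t : ℝ => Gmet s (fun x => γ x + t • w x) u v) 0

/-- `F'` is the derivative of the path `F` with respect to the `H^s` norm, on `S`. -/
def IsHsDerivOn {n : ℕ} (s : ℝ) (F F' : ℝ → ℝ → En n) (S : Set ℝ) : Prop :=
  ∀ t ∈ S,
    Tendsto (fun h : ℝ => HsNorm s fun x => h⁻¹ • (F (t + h) x - F t x) - F' t x)
      (𝓝[{h : ℝ | t + h ∈ S ∧ h ≠ 0}] 0) (𝓝 0)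

/-- The path `F` is continuous on `S` with respect to the `H^s` norm. -/
def HsContOn {n : ℕ} (s : ℝ) (F : ℝ → ℝ → En n) (S : Set ℝ) : Prop :=
  ∀ t ∈ S, Tendsto (fun τ : ℝ => HsNorm s fun x => F τ x - F t x) (𝓝[S] t) (𝓝 0)

/-- A solution of the geodesic initial value problem on `[0,∞)`, recorded as a triple
(position `Γ`, velocity `V`, acceleration `W`); the geodesic equation
`Γ̈ + A_Γ(Γ̇)Γ̇ = 0` is expressed weakly via the Koszul formula for the
Christoffel operator `A`. -/
def GeodesicSol {n : ℕ} (s : ℝ) (γ₀ v₀ : ℝ → En n) (Γ V W : ℝ → ℝ → En n) : Prop :=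
  (∀ t ∈ Set.Ici (0 : ℝ), InM s (Γ t) ∧ InHs s (V t) ∧ InHs s (W t)) ∧
  Γ 0 = γ₀ ∧ V 0 = v₀ ∧
  IsHsDerivOn s Γ V (Set.Ici 0) ∧ IsHsDerivOn s V W (Set.Ici 0) ∧
  HsContOn s V (Set.Ici 0) ∧ HsContOn s W (Set.Ici 0) ∧
  ∀ t ∈ Set.Ici (0 : ℝ), ∀ w : ℝ → En n, InHs s w →
    Gmet s (Γ t) (W t) w + DGdir s (Γ t) (V t) (V t) w
      - (1 / 2) * DGdir s (Γ t) w (V t) (V t) = 0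

lemma dT_eq (x y : ℝ) : dT x y = |x - y - (round (x - y) : ℝ)| := by
  apply le_antisymm
  · exact ciInf_le ⟨0, by rintro _ ⟨k, rfl⟩; exact abs_nonneg _⟩ (round (x - y))
  · exact le_ciInf fun k => round_le _ _

lemma dT_nonneg (x y : ℝ) : 0 ≤ dT x y := by rw [dT_eq]; exact abs_nonneg _

lemma dT_le (x y : ℝ) : dT x y ≤ |x - y| := by
  rw [dT_eq]; simpa using round_le (x - y) 0

lemma dT_le_half (x y : ℝ) : dT x y ≤ 1 / 2 := by
  rw [dT_eq]; exact abs_sub_round _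

lemma dT_measurable : Measurable fun q : ℝ × ℝ => dT q.1 q.2 := by
  have h : Measurable fun x : ℝ => (round x : ℝ) := by
    have h1 : (fun x : ℝ => (round x : ℝ)) = fun x : ℝ => ((⌊x + 1 / 2⌋ : ℤ) : ℝ) := by
      ext x; rw [round_eq]
    rw [h1]
    exact (measurable_from_top (f := fun z : ℤ => (z : ℝ))).comp
      (Int.measurable_floor.comp (measurable_id.add_const _))
  simp_rw [dT_eq]
  have h2 : Measurable fun q : ℝ × ℝ => q.1 - q.2 := measurable_fst.sub measurable_snd
  exact continuous_abs.measurable.comp (h2.sub (h.comp h2))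

lemma dT_add_one (x y : ℝ) : dT x (y + 1) = dT x y := by
  rw [dT_eq, dT_eq]
  have : x - (y + 1) = (x - y) - 1 := by ring
  rw [this, round_sub_one]; push_cast; congr 1; ring

/-- The symmetric fundamental interval. -/
def Jh : Set ℝ := Set.Ioc (-(1 / 2) : ℝ) (1 / 2)

lemma dT_add (x w : ℝ) (hw : w ∈ Jh) : dT x (x + w) = |w| := by
  obtain ⟨h1, h2⟩ := hw
  have h : |w| ≤ 1 / 2 := abs_le.2 ⟨h1.le, h2⟩
  apply le_antisymm
  · have := dT_le x (x + w); simpa using this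
  · unfold dT
    refine le_ciInf fun k => ?_
    rcases eq_or_ne k 0 with rfl | hk
    · simp
    · have h3 : (1 : ℝ) ≤ |(k : ℝ)| := by
        have := Int.one_le_abs hk
        exact_mod_cast this
      have h4 : |(k : ℝ)| ≤ |x - (x + w) - k| + |w| := by
        have := abs_add_le (x - (x + w) - k) w
        calc |(k : ℝ)| = |x - (x + w) - k + w| := by rw [← abs_neg]; congr 1; ring
          _ ≤ _ := this
      linarith

/-- every `y` is `x + w` up to an integer -/
lemma exists_w (x y : ℝ) : ∃ w ∈ Jh, ∃ k : ℤ, y = x + w + k := by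
  obtain ⟨k, hk, -⟩ := existsUnique_add_zsmul_mem_Ioc (one_pos : (0:ℝ) < 1) (y - x) (-(1/2))
  refine ⟨y - x + k, ?_, -k, by push_cast; ring⟩
  simp only [zsmul_eq_mul, mul_one] at hk
  refine ⟨hk.1, hk.2.trans_eq (by norm_num)⟩

lemma lint_periodic (f : ℝ → ℝ≥0∞) (hf : Function.Periodic f 1) (x : ℝ) :
    ∫⁻ y in I01, f y = ∫⁻ w in Jh, f (x + w) := by
  have h0 : ∫⁻ y in I01, f y = ∫⁻ y in Ioc (0:ℝ) (0 + 1), f y := by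
    rw [I01, zero_add]; exact setLIntegral_congr Ico_ae_eq_Ioc
  have hinv : ∀ (g : AddSubgroup.zmultiples (1:ℝ)) (y : ℝ), f (g +ᵥ y) = f y := hf.map_vadd_zmultiples
  have h1 := (isAddFundamentalDomain_Ioc one_pos (0:ℝ) volume).setLIntegral_eq
    (isAddFundamentalDomain_Ioc one_pos (x - 1/2) volume) f hinv
  rw [h0, h1]
  rw [← (measurePreserving_add_left volume x).setLIntegral_comp_preimage_emb
    (measurableEmbedding_addLeft x)]
  have : (fun w => x + w) ⁻¹' Ioc (x - 1/2) (x - 1/2 + 1) = Jh := by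
    ext w; simp only [mem_preimage, mem_Ioc, Jh]
    constructor <;> rintro ⟨h1, h2⟩ <;> constructor <;> linarith
  rw [this]

lemma lint_scale (f : ℝ → ℝ≥0∞) (hf : Measurable f) {θ : ℝ} (hθ : 0 < θ) (hθ1 : θ ≤ 1) :
    ENNReal.ofReal θ * ∫⁻ w in Jh, f (θ * w) ≤ ∫⁻ w in Jh, f w := by
  have hJ : MeasurableSet Jh := measurableSet_Ioc
  have h1 : ∫⁻ w in Jh, f (θ * w) ≤ ∫⁻ w, (Jh.indicator f) (θ * w) := by
    rw [← lintegral_indicator hJ]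
    apply lintegral_mono
    intro w
    by_cases hw : w ∈ Jh
    · have : θ * w ∈ Jh := by
        obtain ⟨a, b⟩ := hw
        constructor <;> nlinarith
      simp [hw, this]
    · simp [hw]
  have h2 : ENNReal.ofReal θ * ∫⁻ w, (Jh.indicator f) (θ * w) = ∫⁻ w in Jh, f w := by
    rw [← lintegral_indicator hJ]
    conv_rhs => rw [← Real.smul_map_volume_mul_left hθ.ne']
    rw [lintegral_smul_measure, lintegral_map (hf.indicator hJ) (measurable_const_mul θ),
      abs_of_pos hθ, smul_eq_mul]
  rw [← h2]
  gcongr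

lemma lint_cs {α : Type*} [MeasurableSpace α] (μ : Measure α) (f g : α → ℝ≥0∞)
    (hf : AEMeasurable f μ) (hg : AEMeasurable g μ) :
    (∫⁻ a, f a * g a ∂μ) ≤ (∫⁻ a, f a ^ 2 ∂μ) ^ (1 / 2 : ℝ) * (∫⁻ a, g a ^ 2 ∂μ) ^ (1 / 2 : ℝ) := by
  have h := ENNReal.lintegral_mul_le_Lp_mul_Lq μ Real.HolderConjugate.two_two hf hg
  simpa using h

lemma lint_sq_le {α : Type*} [MeasurableSpace α] (μ : Measure α) (hμ : μ univ ≤ 1) (f : α → ℝ≥0∞)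
    (hf : AEMeasurable f μ) : (∫⁻ a, f a ∂μ) ^ 2 ≤ ∫⁻ a, f a ^ 2 ∂μ := by
  have h := lint_cs μ f (fun _ => 1) hf aemeasurable_const
  simp only [mul_one, one_pow, lintegral_const, one_mul] at h
  have h2 : (μ univ) ^ (1 / 2 : ℝ) ≤ 1 := ENNReal.rpow_le_one hμ (by norm_num)
  have h3 : (∫⁻ a, f a ∂μ) ≤ (∫⁻ a, f a ^ 2 ∂μ) ^ (1 / 2 : ℝ) :=
    h.trans (mul_le_of_le_one_right' h2)
  calc (∫⁻ a, f a ∂μ) ^ 2 ≤ ((∫⁻ a, f a ^ 2 ∂μ) ^ (1 / 2 : ℝ)) ^ 2 := by gcongr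
    _ = _ := by
      rw [← ENNReal.rpow_natCast, ← ENNReal.rpow_mul]; norm_num

lemma vol_I01 : (volume : Measure ℝ) I01 = 1 := by simp [I01]

lemma vol_I01' : (volume.restrict I01 : Measure ℝ) univ = 1 := by simp [I01]

instance : IsProbabilityMeasure (volume.restrict I01 : Measure ℝ) := ⟨vol_I01'⟩

lemma meas_I01 : MeasurableSet I01 := measurableSet_Ico

lemma lint_affine (f : ℝ → ℝ≥0∞) (hf : Measurable f) {r x : ℝ} (hr : 0 < r) (hr1 : r ≤ 1)
    (hx : x ∈ I01) :
    ENNReal.ofReal r * ∫⁻ z in I01, f (x + r * (z - x)) ≤ ∫⁻ z in I01, f z := by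
  have h1 : ∫⁻ z in I01, f (x + r * (z - x)) ≤ ∫⁻ z, (I01.indicator f) (r * z + (x - r * x)) := by
    rw [← lintegral_indicator meas_I01]
    apply lintegral_mono
    intro z
    by_cases hz : z ∈ I01
    · have : r * z + (x - r * x) ∈ I01 := by
        obtain ⟨a, b⟩ := hz
        obtain ⟨c, d⟩ := hx
        constructor <;> nlinarith
      simp only [hz, indicator_of_mem, this]
      apply le_of_eq; congr 1; ring
    · simp [hz]
  have hm : Measurable fun z => (I01.indicator f) (z + (x - r * x)) :=
    (hf.indicator meas_I01).comp (measurable_add_const _)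
  have h2 : ENNReal.ofReal r * ∫⁻ z, (I01.indicator f) (r * z + (x - r * x)) = ∫⁻ z in I01, f z := by
    rw [← lintegral_indicator meas_I01]
    conv_rhs => rw [← lintegral_add_right_eq_self _ (x - r * x)]
    conv_rhs => rw [← Real.smul_map_volume_mul_left hr.ne']
    rw [lintegral_smul_measure, lintegral_map hm (measurable_const_mul r),
      abs_of_pos hr, smul_eq_mul]
  rw [← h2]
  gcongr

lemma lint2_le_const (f g : ℝ → ℝ → ℝ≥0∞) {c : ℝ≥0∞} (hc : c ≠ ⊤) {A B : Set ℝ}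
    (hA : MeasurableSet A) (hB : MeasurableSet B)
    (h : ∀ x ∈ A, ∀ y ∈ B, f x y ≤ c * g x y) :
    ∫⁻ x in A, ∫⁻ y in B, f x y ≤ c * ∫⁻ x in A, ∫⁻ y in B, g x y := by
  rw [← lintegral_const_mul' _ _ hc]
  refine setLIntegral_mono' hA fun x hx => ?_
  rw [← lintegral_const_mul' _ _ hc]
  exact setLIntegral_mono' hB fun y hy => h x hx y hy

/-- Gagliardo kernel. -/
def gK {n : ℕ} (σ : ℝ) (v : ℝ → En n) (x y : ℝ) : ℝ≥0∞ :=
  ENNReal.ofReal (‖v y - v x‖ ^ 2 / dT x y ^ (2 * σ + 1))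

lemma gag_eq {n : ℕ} (σ : ℝ) (v : ℝ → En n) :
    gagliardoSqE σ v = ∫⁻ x in I01, ∫⁻ y in I01, gK σ v x y := rfl

lemma gK_meas {n : ℕ} (σ : ℝ) {v : ℝ → En n} (hv : Continuous v) :
    Measurable fun q : ℝ × ℝ => gK σ v q.1 q.2 := by
  unfold gK
  apply ENNReal.measurable_ofReal.comp
  apply Measurable.div
  · have : Continuous fun q : ℝ × ℝ => ‖v q.2 - v q.1‖ ^ 2 := by fun_prop
    exact this.measurable
  · exact dT_measurable.pow_const _

lemma gK_bound {n : ℕ} {σ : ℝ} (hσ : 1 / 2 < σ) (v : ℝ → En n) {x y r : ℝ} (hx : x ∈ I01) (hy : y ∈ I01)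
    (h : |x - y| ≤ r) :
    ENNReal.ofReal (‖v y - v x‖ ^ 2) ≤ ENNReal.ofReal (r ^ (2 * σ + 1)) * gK σ v x y := by
  rcases eq_or_ne x y with rfl | hxy
  · simp
  have hr : 0 ≤ r := (abs_nonneg _).trans h
  unfold gK
  rw [← ENNReal.ofReal_mul (by positivity)]
  apply ENNReal.ofReal_le_ofReal
  have hd : 0 < dT x y := by
    rw [dT_eq]
    refine abs_pos.2 fun h0 => hxy ?_
    have h1 : x - y = (round (x - y) : ℝ) := by linarith
    obtain ⟨a, b⟩ := hx
    obtain ⟨c, d⟩ := hy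
    have h2 : (round (x - y) : ℝ) < 1 := by linarith
    have h3 : (-1 : ℝ) < (round (x - y) : ℝ) := by linarith
    have h2' : round (x - y) < 1 := by exact_mod_cast h2
    have h3' : -1 < round (x - y) := by exact_mod_cast h3
    have : round (x - y) = 0 := by omega
    rw [this] at h1; simp at h1; linarith
  have h1 : dT x y ^ (2 * σ + 1) ≤ r ^ (2 * σ + 1) :=
    Real.rpow_le_rpow hd.le ((dT_le x y).trans h) (by linarith)
  have h2 : 0 < dT x y ^ (2 * σ + 1) := Real.rpow_pos_of_pos hd _
  rw [mul_div_assoc', le_div_iff₀ h2, mul_comm]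
  gcongr

lemma gag_affine {n : ℕ} (σ : ℝ) {v : ℝ → En n} (hv : Continuous v) {x r : ℝ}
    (hx : x ∈ I01) (hr : 0 < r) (hr1 : r ≤ 1) :
    ENNReal.ofReal r * (ENNReal.ofReal (r / 2) *
      ∫⁻ z in I01, ∫⁻ z' in I01, gK σ v (x + r * (z - x)) (x + (r / 2) * (z' - x))) ≤
      gagliardoSqE σ v := by
  have hm : Measurable fun z => ∫⁻ y in I01, gK σ v z y :=
    (gK_meas σ hv).lintegral_prod_right'
  have h1 : (ENNReal.ofReal (r / 2) *
      ∫⁻ z in I01, ∫⁻ z' in I01, gK σ v (x + r * (z - x)) (x + (r / 2) * (z' - x))) ≤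
      ∫⁻ z in I01, ∫⁻ y in I01, gK σ v (x + r * (z - x)) y := by
    rw [← lintegral_const_mul' _ _ ENNReal.ofReal_ne_top]
    refine lintegral_mono fun z => ?_
    have hm' : Measurable (gK σ v (x + r * (z - x))) :=
      (gK_meas σ hv).of_uncurry_left
    have hr2 : 0 < r / 2 := by positivity
    have hr3 : r / 2 ≤ 1 := by linarith
    exact lint_affine _ hm' hr2 hr3 hx
  have h2 := lint_affine (fun z => ∫⁻ y in I01, gK σ v z y) hm hr hr1 hx
  exact (mul_le_mul_right h1 _).trans h2

lemma avg_step {n : ℕ} {σ : ℝ} (hσ : 1 / 2 < σ) {v : ℝ → En n} (hv : Continuous v) {x r : ℝ}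
    (hx : x ∈ I01) (hr : 0 < r) (hr1 : r ≤ 1) :
    ‖(∫ z in I01, v (x + r * (z - x))) - ∫ z in I01, v (x + (r / 2) * (z - x))‖ₑ ^ 2 ≤
      ENNReal.ofReal (2 * r ^ (2 * σ - 1)) * gagliardoSqE σ v := by
  set μ := (volume.restrict I01 : Measure ℝ) with hμ
  have hint : ∀ c : ℝ, Integrable (fun z => v (x + c * (z - x))) μ := fun c => by
    have hc : Continuous fun z => v (x + c * (z - x)) := by fun_prop
    exact (hc.continuousOn.integrableOn_compact isCompact_Icc).mono_set
      (t := Icc 0 1) Ico_subset_Icc_self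
  have e1 : (∫ z, v (x + r * (z - x)) ∂μ) - ∫ z, v (x + (r / 2) * (z - x)) ∂μ =
      ∫ z, ∫ z', (v (x + r * (z - x)) - v (x + (r / 2) * (z' - x))) ∂μ ∂μ := by
    have : ∀ z, ∫ z', (v (x + r * (z - x)) - v (x + (r / 2) * (z' - x))) ∂μ =
        v (x + r * (z - x)) - ∫ z', v (x + (r / 2) * (z' - x)) ∂μ := fun z => by
      rw [integral_sub (integrable_const _) (hint _)]; simp
    simp_rw [this]
    rw [integral_sub (hint _) (integrable_const _)]; simp
  have hmeas : Measurable fun q : ℝ × ℝ =>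
      ‖v (x + r * (q.1 - x)) - v (x + (r / 2) * (q.2 - x))‖ₑ := by
    have : Continuous fun q : ℝ × ℝ => v (x + r * (q.1 - x)) - v (x + (r / 2) * (q.2 - x)) := by
      fun_prop
    exact this.measurable.enorm
  have e2 : ‖∫ z, ∫ z', (v (x + r * (z - x)) - v (x + (r / 2) * (z' - x))) ∂μ ∂μ‖ₑ ^ 2 ≤
      ∫⁻ z, ∫⁻ z', ‖v (x + r * (z - x)) - v (x + (r / 2) * (z' - x))‖ₑ ^ 2 ∂μ ∂μ := by
    calc _ ≤ (∫⁻ z, ∫⁻ z', ‖v (x + r * (z - x)) - v (x + (r / 2) * (z' - x))‖ₑ ∂μ ∂μ) ^ 2 := by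
          gcongr
          refine (enorm_integral_le_lintegral_enorm _).trans (lintegral_mono fun z => ?_)
          exact enorm_integral_le_lintegral_enorm _
      _ ≤ ∫⁻ z, (∫⁻ z', ‖v (x + r * (z - x)) - v (x + (r / 2) * (z' - x))‖ₑ ∂μ) ^ 2 ∂μ :=
          lint_sq_le μ vol_I01'.le _ (hmeas.lintegral_prod_right').aemeasurable
      _ ≤ _ := lintegral_mono fun z => lint_sq_le μ vol_I01'.le _
          (hmeas.comp measurable_prodMk_left).aemeasurable
  have e3 : ∫⁻ z, ∫⁻ z', ‖v (x + r * (z - x)) - v (x + (r / 2) * (z' - x))‖ₑ ^ 2 ∂μ ∂μ ≤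
      ENNReal.ofReal (r ^ (2 * σ + 1)) *
        ∫⁻ z, ∫⁻ z', gK σ v (x + r * (z - x)) (x + (r / 2) * (z' - x)) ∂μ ∂μ := by
    refine lint2_le_const _ _ ENNReal.ofReal_ne_top meas_I01 meas_I01 fun z hz z' hz' => ?_
    obtain ⟨a, b⟩ := hz
    obtain ⟨a', b'⟩ := hz'
    obtain ⟨c, d⟩ := hx
    have := gK_bound hσ v (x := x + r * (z - x)) (y := x + (r / 2) * (z' - x)) (r := r)
      ⟨by nlinarith, by nlinarith⟩ ⟨by nlinarith, by nlinarith⟩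
      (abs_le.2 ⟨by nlinarith, by nlinarith⟩)
    refine le_trans (le_of_eq ?_) this
    rw [enorm_sub_rev, ← ofReal_norm, ENNReal.ofReal_pow (norm_nonneg _)]
  have e4 := gag_affine σ hv hx hr hr1
  rw [e1]
  refine e2.trans (e3.trans ?_)
  refine le_trans (le_of_eq ?_) (mul_le_mul_right e4 (ENNReal.ofReal (2 * r ^ (2 * σ - 1))))
  rw [← mul_assoc, ← mul_assoc, ← ENNReal.ofReal_mul (by positivity),
    ← ENNReal.ofReal_mul (by positivity)]
  congr 2
  have : r ^ (2 * σ + 1) = r ^ (2 * σ - 1) * r ^ (2 : ℝ) := by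
    rw [← Real.rpow_add hr]; congr 1; ring
  rw [this, Real.rpow_two]; ring

/-- The Morrey constant. -/
def mK (σ : ℝ) : ℝ := Real.sqrt 2 / (1 - (1 / 2 : ℝ) ^ (σ - 1 / 2))

lemma morrey {n : ℕ} {σ : ℝ} (hσ : 1 / 2 < σ) {v : ℝ → En n} (hv : Continuous v)
    (hg : gagliardoSqE σ v < ⊤) {x : ℝ} (hx : x ∈ I01) :
    ‖v x‖ ≤ ‖∫ z in I01, v z‖ + mK σ * Real.sqrt (gagliardoSqE σ v).toReal := by
  obtain ⟨S, hS⟩ : ∃ S, S = Real.sqrt (gagliardoSqE σ v).toReal := ⟨_, rfl⟩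
  have hS0 : 0 ≤ S := hS ▸ Real.sqrt_nonneg _
  rw [← hS]
  set ρ : ℝ := (1 / 2 : ℝ) ^ (σ - 1 / 2) with hρ
  have hρ1 : ρ < 1 := Real.rpow_lt_one (by norm_num) (by norm_num) (by linarith)
  let a : ℕ → En n := fun k => ∫ z in I01, v (x + (1 / 2 : ℝ) ^ k * (z - x))
  have hstep : ∀ k, dist (a k) (a (k + 1)) ≤ (Real.sqrt 2 * S) * ρ ^ k := fun k => by
    have hr : (0 : ℝ) < (1 / 2 : ℝ) ^ k := by positivity
    have h := avg_step hσ hv hx hr (pow_le_one₀ (by norm_num) (by norm_num))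
    have hh : a k - a (k + 1) = (∫ z in I01, v (x + (1 / 2 : ℝ) ^ k * (z - x))) -
        ∫ z in I01, v (x + ((1 / 2 : ℝ) ^ k / 2) * (z - x)) := by
      have : (1 / 2 : ℝ) ^ (k + 1) = (1 / 2 : ℝ) ^ k / 2 := by rw [pow_succ]; ring
      simp only [a, this]
    rw [← hh, ← ENNReal.ofReal_toReal hg.ne, ← ENNReal.ofReal_mul (by positivity), ← ofReal_norm,
      ← ENNReal.ofReal_pow (norm_nonneg _), ENNReal.ofReal_le_ofReal_iff (by positivity)] at h
    rw [dist_eq_norm]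
    have hSS : (gagliardoSqE σ v).toReal = S ^ 2 := by
      rw [hS]; exact (Real.sq_sqrt ENNReal.toReal_nonneg).symm
    have hpow : ((1 / 2 : ℝ) ^ k) ^ (2 * σ - 1) = (ρ ^ k) ^ 2 := by
      rw [hρ, ← Real.rpow_natCast, ← Real.rpow_natCast, ← Real.rpow_natCast,
        ← Real.rpow_mul (by positivity), ← Real.rpow_mul (by positivity), ← Real.rpow_mul (by positivity)]
      congr 1; push_cast; ring
    rw [hSS, hpow] at h
    have hρ0 : 0 < ρ := by positivity
    apply abs_le_of_sq_le_sq' _ (by positivity) |>.2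
    calc _ ≤ _ := h
      _ = _ := by rw [mul_pow, mul_pow, Real.sq_sqrt zero_le_two]; ring
  have hlim : Tendsto a atTop (𝓝 (v x)) := by
    have hc : Continuous fun r : ℝ => ∫ z in (0 : ℝ)..1, v (x + r * (z - x)) :=
      intervalIntegral.continuous_parametric_intervalIntegral_of_continuous' (by fun_prop) 0 1
    have h0 : Tendsto (fun k : ℕ => (1 / 2 : ℝ) ^ k) atTop (𝓝 0) :=
      tendsto_pow_atTop_nhds_zero_of_lt_one (by norm_num) (by norm_num)
    have h1 := (hc.tendsto 0).comp h0
    simp only [zero_mul, add_zero, intervalIntegral.integral_const, sub_zero, one_smul] at h1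
    refine h1.congr fun k => ?_
    simp only [Function.comp, a]
    rw [intervalIntegral.integral_of_le zero_le_one, I01, integral_Ico_eq_integral_Ioc]
  have h := dist_le_of_le_geometric_of_tendsto₀ ρ _ hρ1 hstep hlim
  have ha0 : a 0 = ∫ z in I01, v z := by simp [a]
  rw [ha0, dist_comm, dist_eq_norm] at h
  have := norm_le_norm_add_norm_sub' (v x) (∫ z in I01, v z)
  have h3 : mK σ * S = Real.sqrt 2 * S / (1 - ρ) := by unfold mK; ring
  linarith

lemma per_deriv {n : ℕ} {u : ℝ → En n} (h : Function.Periodic u 1) :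
    Function.Periodic (deriv u) 1 := fun x => by
  have h1 : (fun y => u (y + 1)) = u := funext h
  rw [← deriv_comp_add_const, h1]

lemma intI01 {E : Type*} [NormedAddCommGroup E] {f : ℝ → E} (hf : Continuous f) :
    Integrable f (volume.restrict I01) :=
  (hf.continuousOn.integrableOn_compact isCompact_Icc).mono_set
      (t := Icc 0 1) Ico_subset_Icc_self

lemma InHs.cont {n : ℕ} {s : ℝ} {u : ℝ → En n} (h : InHs s u) : Continuous u := h.2.1.continuous

lemma InHs.diff {n : ℕ} {s : ℝ} {u : ℝ → En n} (h : InHs s u) : Differentiable ℝ u :=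
  h.2.1.differentiable (by norm_num)

lemma InHs.contD {n : ℕ} {s : ℝ} {u : ℝ → En n} (h : InHs s u) : Continuous (deriv u) :=
  h.2.1.continuous_deriv (by norm_num)

lemma gag_sub {n : ℕ} (σ : ℝ) {a b : ℝ → En n} (ha : Continuous a) (hb : Continuous b) :
    gagliardoSqE σ (fun x => a x - b x) ≤ ENNReal.ofReal 2 * (gagliardoSqE σ a + gagliardoSqE σ b) := by
  rw [gag_eq, gag_eq, gag_eq]
  have hm : Measurable fun z => ∫⁻ y in I01, gK σ a z y := (gK_meas σ ha).lintegral_prod_right'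
  rw [← lintegral_add_left hm]
  have h : ∀ x, (∫⁻ y in I01, gK σ a x y) + (∫⁻ y in I01, gK σ b x y) =
      ∫⁻ y in I01, (gK σ a x y + gK σ b x y) := fun x => by
    have hm' : Measurable (gK σ a x) := (gK_meas σ ha).of_uncurry_left
    rw [← lintegral_add_left hm']
  simp_rw [h]
  refine lint2_le_const _ _ ENNReal.ofReal_ne_top meas_I01 meas_I01 fun x _ y _ => ?_
  unfold gK
  have hd : 0 ≤ dT x y ^ (2 * σ + 1) := Real.rpow_nonneg (dT_nonneg _ _) _
  rw [← ENNReal.ofReal_add (by positivity) (by positivity)]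
  rw [← ENNReal.ofReal_mul (by norm_num)]
  apply ENNReal.ofReal_le_ofReal
  rw [← add_div, mul_div_assoc']
  apply div_le_div_of_nonneg_right _ hd
  have h1 : ‖a y - b y - (a x - b x)‖ ≤ ‖a y - a x‖ + ‖b y - b x‖ := by
    have : a y - b y - (a x - b x) = (a y - a x) - (b y - b x) := by abel
    rw [this]; exact norm_sub_le _ _
  have h2 := pow_le_pow_left₀ (norm_nonneg _) h1 2
  nlinarith [sq_nonneg (‖a y - a x‖ - ‖b y - b x‖)]

lemma gag_smul {n : ℕ} (σ : ℝ) (c : ℝ) (a : ℝ → En n) :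
    gagliardoSqE σ (fun x => c • a x) ≤ ENNReal.ofReal (c ^ 2) * gagliardoSqE σ a := by
  rw [gag_eq, gag_eq]
  refine lint2_le_const _ _ ENNReal.ofReal_ne_top meas_I01 meas_I01 fun x _ y _ => ?_
  unfold gK
  rw [← ENNReal.ofReal_mul (by positivity), ← smul_sub, norm_smul, mul_pow, Real.norm_eq_abs, sq_abs,
    mul_div_assoc]

lemma InHs.sub {n : ℕ} {s : ℝ} {u v : ℝ → En n} (hu : InHs s u) (hv : InHs s v) :
    InHs s fun x => u x - v x := by
  refine ⟨fun x => by simp only [hu.1 x, hv.1 x], hu.2.1.sub hv.2.1, ?_⟩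
  have : deriv (fun x => u x - v x) = fun x => deriv u x - deriv v x :=
    funext fun x => deriv_sub (hu.diff x) (hv.diff x)
  rw [this]
  refine (gag_sub _ hu.contD hv.contD).trans_lt ?_
  exact ENNReal.mul_lt_top ENNReal.ofReal_lt_top (ENNReal.add_lt_top.2 ⟨hu.2.2, hv.2.2⟩)

lemma InHs.smul {n : ℕ} {s : ℝ} (c : ℝ) {u : ℝ → En n} (hu : InHs s u) :
    InHs s fun x => c • u x := by
  refine ⟨fun x => by simp only [hu.1 x], hu.2.1.const_smul c, ?_⟩
  have : deriv (fun x => c • u x) = fun x => c • deriv u x :=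
    funext fun x => deriv_fun_const_smul c (hu.diff x)
  rw [this]
  refine (gag_smul _ _ _).trans_lt ?_
  exact ENNReal.mul_lt_top ENNReal.ofReal_lt_top hu.2.2

lemma norm_int_le {n : ℕ} {v : ℝ → En n} (hv : Continuous v) :
    ‖∫ z in I01, v z‖ ≤ Real.sqrt (∫ z in I01, ‖v z‖ ^ 2) := by
  apply Real.le_sqrt_of_sq_le
  have h1 := norm_integral_le_integral_norm (μ := volume.restrict I01) v
  set m := ∫ z in I01, ‖v z‖ with hm
  have h2 : 0 ≤ ∫ z in I01, (‖v z‖ - m) ^ 2 := integral_nonneg fun z => sq_nonneg _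
  have h3 : ∫ z in I01, (‖v z‖ - m) ^ 2 = (∫ z in I01, ‖v z‖ ^ 2) - m ^ 2 := by
    have : ∀ z, (‖v z‖ - m) ^ 2 = ‖v z‖ ^ 2 - (2 * m) * ‖v z‖ + m ^ 2 := fun z => by ring
    simp_rw [this]
    rw [integral_add, integral_sub, integral_const_mul, ← hm]
    · simp; ring
    · exact intI01 (by fun_prop)
    · exact intI01 (by fun_prop)
    · exact intI01 (by fun_prop)
    · exact intI01 (by fun_prop)
  have := pow_le_pow_left₀ (norm_nonneg _) h1 2
  linarith

lemma HsNorm_nonneg {n : ℕ} (s : ℝ) (u : ℝ → En n) : 0 ≤ HsNorm s u := Real.sqrt_nonneg _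

lemma HsNorm_parts {n : ℕ} (s : ℝ) (u : ℝ → En n) :
    Real.sqrt (∫ z in I01, ‖u z‖ ^ 2) ≤ HsNorm s u ∧
    Real.sqrt (∫ z in I01, ‖deriv u z‖ ^ 2) ≤ HsNorm s u ∧
    Real.sqrt (gagliardoSqE (s - 1) (deriv u)).toReal ≤ HsNorm s u := by
  have h1 : 0 ≤ ∫ z in I01, ‖u z‖ ^ 2 := integral_nonneg fun z => sq_nonneg _
  have h2 : 0 ≤ ∫ z in I01, ‖deriv u z‖ ^ 2 := integral_nonneg fun z => sq_nonneg _
  have h3 : 0 ≤ (gagliardoSqE (s - 1) (deriv u)).toReal := ENNReal.toReal_nonneg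
  unfold HsNorm HsNormSq
  refine ⟨?_, ?_, ?_⟩ <;> apply Real.sqrt_le_sqrt <;> linarith

lemma gag_le_HsNorm {n : ℕ} {s : ℝ} {u : ℝ → En n} (hu : InHs s u) :
    gagliardoSqE (s - 1) (deriv u) ≤ ENNReal.ofReal (HsNorm s u ^ 2) := by
  rw [← ENNReal.ofReal_toReal hu.2.2.ne]
  apply ENNReal.ofReal_le_ofReal
  have := (HsNorm_parts s u).2.2
  rwa [Real.sqrt_le_left (HsNorm_nonneg _ _)] at this

/-- embedding constant -/
def cK (s : ℝ) : ℝ := 2 + mK (s - 1)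

lemma mK_nonneg {σ : ℝ} (h : 1 / 2 < σ) : 0 ≤ mK σ := by
  unfold mK
  have : (1 / 2 : ℝ) ^ (σ - 1 / 2) < 1 :=
    Real.rpow_lt_one (by norm_num) (by norm_num) (by linarith)
  apply div_nonneg (Real.sqrt_nonneg _) (by linarith)

lemma cK_pos {s : ℝ} (hs : 3 / 2 < s) : 0 < cK s := by
  have := mK_nonneg (σ := s - 1) (by linarith)
  unfold cK; linarith

lemma deriv_le_Hs' {n : ℕ} {s : ℝ} (hs : 3 / 2 < s) {u : ℝ → En n} (hu : InHs s u) (x : ℝ) :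
    ‖deriv u x‖ ≤ (1 + mK (s - 1)) * HsNorm s u := by
  obtain ⟨y, hy, hxy⟩ := (per_deriv hu.1).exists_mem_Ico₀ one_pos x
  rw [hxy]
  have h1 := morrey (σ := s - 1) (by linarith) hu.contD hu.2.2 hy
  have h2 := norm_int_le hu.contD
  obtain ⟨-, h3, h4⟩ := HsNorm_parts s u
  have h5 := mul_le_mul_of_nonneg_left h4 (mK_nonneg (σ := s - 1) (by linarith))
  linarith

lemma deriv_le_Hs {n : ℕ} {s : ℝ} (hs : 3 / 2 < s) {u : ℝ → En n} (hu : InHs s u) (x : ℝ) :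
    ‖deriv u x‖ ≤ cK s * HsNorm s u := by
  have h1 := deriv_le_Hs' hs hu x
  have := HsNorm_nonneg s u
  unfold cK; linarith

lemma lip_of_deriv {n : ℕ} {s : ℝ} {u : ℝ → En n} (hu : InHs s u) {L : ℝ}
    (hL : ∀ x, ‖deriv u x‖ ≤ L) (x y : ℝ) : ‖u y - u x‖ ≤ L * |y - x| := by
  have := Convex.norm_image_sub_le_of_norm_deriv_le (f := u) (s := univ) (x := x) (y := y)
    (fun z _ => hu.diff z) (fun z _ => hL z) convex_univ (mem_univ _) (mem_univ _)
  simpa [Real.norm_eq_abs] using this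

lemma le_Hs {n : ℕ} {s : ℝ} (hs : 3 / 2 < s) {u : ℝ → En n} (hu : InHs s u) (x : ℝ) :
    ‖u x‖ ≤ cK s * HsNorm s u := by
  obtain ⟨y, hy, hxy⟩ := hu.1.exists_mem_Ico₀ one_pos x
  rw [hxy]
  have hlip := lip_of_deriv hu (deriv_le_Hs' hs hu)
  set L := (1 + mK (s - 1)) * HsNorm s u with hLd
  have hL : 0 ≤ L := (norm_nonneg _).trans (deriv_le_Hs' hs hu 0)
  have h1 : ‖u y - ∫ z in I01, u z‖ ≤ L := by
    have e : u y - ∫ z in I01, u z = ∫ z in I01, (u y - u z) := by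
      rw [integral_sub (integrable_const _) (intI01 hu.cont)]; simp
    rw [e]
    have := norm_setIntegral_le_of_norm_le_const (μ := volume) (s := I01) (C := L)
      (f := fun z => u y - u z) (by rw [vol_I01]; norm_num) (fun z hz => by
        refine (hlip z y).trans ?_
        have : |y - z| ≤ 1 := abs_le.2 ⟨by linarith [hy.1, hz.2], by linarith [hy.2, hz.1]⟩
        exact mul_le_of_le_one_right hL this)
    simpa [Measure.real, vol_I01] using this
  have h2 := norm_int_le hu.cont
  obtain ⟨h3, -, -⟩ := HsNorm_parts s u
  have h4 := norm_le_norm_add_norm_sub' (u y) (∫ z in I01, u z)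
  have : cK s * HsNorm s u = HsNorm s u + L := by rw [hLd]; unfold cK; ring
  linarith

lemma HsNormSq_sub {n : ℕ} {s : ℝ} {u v : ℝ → En n} (hu : InHs s u) (hv : InHs s v) :
    HsNormSq s (fun x => u x - v x) ≤ 2 * (HsNormSq s u + HsNormSq s v) := by
  have hd : deriv (fun x => u x - v x) = fun x => deriv u x - deriv v x :=
    funext fun x => deriv_sub (hu.diff x) (hv.diff x)
  have key : ∀ a b : ℝ → En n, Continuous a → Continuous b →
      ∫ x in I01, ‖a x - b x‖ ^ 2 ≤ 2 * ((∫ x in I01, ‖a x‖ ^ 2) + ∫ x in I01, ‖b x‖ ^ 2) := by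
    intro a b ha hb
    rw [← integral_add (intI01 (by fun_prop)) (intI01 (by fun_prop)), ← integral_const_mul]
    refine integral_mono (intI01 (by fun_prop)) (intI01 (by fun_prop)) fun x => ?_
    have h1 := pow_le_pow_left₀ (norm_nonneg _) (norm_sub_le (a x) (b x)) 2
    simp only
    nlinarith [sq_nonneg (‖a x‖ - ‖b x‖)]
  have h1 := key u v hu.cont hv.cont
  have h2 := key _ _ hu.contD hv.contD
  have h3 : (gagliardoSqE (s - 1) (fun x => deriv u x - deriv v x)).toReal ≤
      2 * ((gagliardoSqE (s - 1) (deriv u)).toReal + (gagliardoSqE (s - 1) (deriv v)).toReal) := by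
    have := ENNReal.toReal_mono (ENNReal.mul_lt_top ENNReal.ofReal_lt_top
      (ENNReal.add_lt_top.2 ⟨hu.2.2, hv.2.2⟩)).ne (gag_sub (s - 1) hu.contD hv.contD)
    rwa [ENNReal.toReal_mul, ENNReal.toReal_ofReal zero_le_two,
      ENNReal.toReal_add hu.2.2.ne hv.2.2.ne] at this
  unfold HsNormSq
  rw [hd]
  linarith

lemma HsNormSq_smul {n : ℕ} {s : ℝ} (c : ℝ) {u : ℝ → En n} (hu : InHs s u) :
    HsNormSq s (fun x => c • u x) ≤ c ^ 2 * HsNormSq s u := by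
  have hd : deriv (fun x => c • u x) = fun x => c • deriv u x :=
    funext fun x => deriv_fun_const_smul c (hu.diff x)
  have h3 : (gagliardoSqE (s - 1) (fun x => c • deriv u x)).toReal ≤
      c ^ 2 * (gagliardoSqE (s - 1) (deriv u)).toReal := by
    have := ENNReal.toReal_mono (ENNReal.mul_lt_top ENNReal.ofReal_lt_top hu.2.2).ne
      (gag_smul (s - 1) c (deriv u))
    rwa [ENNReal.toReal_mul, ENNReal.toReal_ofReal (sq_nonneg _)] at this
  unfold HsNormSq
  rw [hd]
  simp only [norm_smul, mul_pow, Real.norm_eq_abs, sq_abs, integral_const_mul]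
  linarith

lemma HsNormSq_nonneg {n : ℕ} (s : ℝ) (u : ℝ → En n) : 0 ≤ HsNormSq s u := by
  unfold HsNormSq
  have h1 : 0 ≤ ∫ z in I01, ‖u z‖ ^ 2 := integral_nonneg fun z => sq_nonneg _
  have h2 : 0 ≤ ∫ z in I01, ‖deriv u z‖ ^ 2 := integral_nonneg fun z => sq_nonneg _
  have h3 : 0 ≤ (gagliardoSqE (s - 1) (deriv u)).toReal := ENNReal.toReal_nonneg
  linarith

lemma HsNorm_sq {n : ℕ} (s : ℝ) (u : ℝ → En n) : HsNorm s u ^ 2 = HsNormSq s u :=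
  Real.sq_sqrt (HsNormSq_nonneg s u)

/-- clamp to the unit interval -/
def cl (t : ℝ) : ℝ := max 0 (min 1 t)

lemma cl_cont : Continuous cl := by unfold cl; fun_prop

lemma cl_mem (t : ℝ) : cl t ∈ Icc (0 : ℝ) 1 :=
  ⟨le_max_left _ _, max_le zero_le_one (min_le_left _ _)⟩

lemma cl_eq {t : ℝ} (ht : t ∈ Icc (0 : ℝ) 1) : cl t = t := by
  unfold cl; rw [min_eq_right ht.2, max_eq_right ht.1]

lemma cl_tendsto (t x : ℝ) :
    Tendsto (fun q : ℝ × ℝ => cl q.1) (𝓝 (t, x)) (𝓝[Icc (0 : ℝ) 1] (cl t)) := by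
  apply tendsto_nhdsWithin_of_tendsto_nhds_of_eventually_within
  · exact (cl_cont.comp continuous_fst).tendsto (t, x)
  · exact Eventually.of_forall fun q => cl_mem _

lemma cont_of_Hs {n : ℕ} {s : ℝ} (hs : 3 / 2 < s) {F : ℝ → ℝ → En n}
    (hF : ∀ t ∈ Icc (0 : ℝ) 1, InHs s (F t)) (hc : HsContOn s F (Icc 0 1)) :
    Continuous (fun q : ℝ × ℝ => F (cl q.1) q.2) ∧
    Continuous (fun q : ℝ × ℝ => deriv (F (cl q.1)) q.2) := by
  have hlim : ∀ t x : ℝ, Tendsto (fun q : ℝ × ℝ =>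
      cK s * HsNorm s fun x => F (cl q.1) x - F (cl t) x) (𝓝 (t, x)) (𝓝 0) := fun t x => by
    have := ((hc (cl t) (cl_mem t)).comp (cl_tendsto t x)).const_mul (cK s)
    simpa using this
  constructor
  · rw [continuous_iff_continuousAt]
    rintro ⟨t, x⟩
    have h1 : Tendsto (fun q : ℝ × ℝ => F (cl q.1) q.2 - F (cl t) q.2) (𝓝 (t, x)) (𝓝 0) :=
      squeeze_zero_norm (fun q => le_Hs hs ((hF _ (cl_mem q.1)).sub (hF _ (cl_mem t))) q.2) (hlim t x)
    have h2 : Tendsto (fun q : ℝ × ℝ => F (cl t) q.2) (𝓝 (t, x)) (𝓝 (F (cl t) x)) :=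
      ((hF _ (cl_mem t)).cont.comp continuous_snd).tendsto (t, x)
    have h3 := h1.add h2
    simpa [ContinuousAt] using h3
  · rw [continuous_iff_continuousAt]
    rintro ⟨t, x⟩
    have h1 : Tendsto (fun q : ℝ × ℝ => deriv (F (cl q.1)) q.2 - deriv (F (cl t)) q.2)
        (𝓝 (t, x)) (𝓝 0) := by
      refine squeeze_zero_norm (fun q => ?_) (hlim t x)
      have := deriv_le_Hs hs ((hF _ (cl_mem q.1)).sub (hF _ (cl_mem t))) q.2
      rwa [deriv_fun_sub ((hF _ (cl_mem q.1)).diff _) ((hF _ (cl_mem t)).diff _)] at this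
    have h2 : Tendsto (fun q : ℝ × ℝ => deriv (F (cl t)) q.2) (𝓝 (t, x)) (𝓝 (deriv (F (cl t)) x)) :=
      ((hF _ (cl_mem t)).contD.comp continuous_snd).tendsto (t, x)
    have h3 := h1.add h2
    simpa [ContinuousAt] using h3

lemma bdd_of_Hs {n : ℕ} {s : ℝ} {F : ℝ → ℝ → En n}
    (hF : ∀ t ∈ Icc (0 : ℝ) 1, InHs s (F t)) (hc : HsContOn s F (Icc 0 1)) :
    ∃ K, ∀ t ∈ Icc (0 : ℝ) 1, HsNormSq s (F t) ≤ K := by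
  refine isCompact_Icc.induction_on (p := fun S => ∃ K, ∀ t ∈ S, HsNormSq s (F t) ≤ K)
    ⟨0, by simp⟩ ?_ ?_ ?_
  · rintro S T hST ⟨K, hK⟩
    exact ⟨K, fun t ht => hK t (hST ht)⟩
  · rintro S T ⟨K, hK⟩ ⟨L, hL⟩
    refine ⟨max K L, ?_⟩
    rintro t (ht | ht)
    · exact (hK t ht).trans (le_max_left _ _)
    · exact (hL t ht).trans (le_max_right _ _)
  · intro t ht
    have h1 := (hc t ht).eventually (gt_mem_nhds (zero_lt_one (α := ℝ)))
    refine ⟨_, inter_mem h1 self_mem_nhdsWithin, 2 * (1 + HsNormSq s (fun x => (-1 : ℝ) • F t x)), ?_⟩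
    rintro τ ⟨h2, h3⟩
    have h4 := HsNormSq_sub ((hF τ h3).sub (hF t ht)) ((hF t ht).smul (-1))
    have h5 : (fun x => F τ x - F t x - (-1 : ℝ) • F t x) = F τ := by ext x; simp
    rw [h5] at h4
    refine h4.trans ?_
    have h6 : HsNormSq s (fun x => F τ x - F t x) ≤ 1 := by
      rw [← HsNorm_sq]
      have h2' : HsNorm s (fun x => F τ x - F t x) < 1 := h2
      have := HsNorm_nonneg s (fun x => F τ x - F t x)
      nlinarith
    linarith

lemma path_slope_mem {n : ℕ} {s : ℝ} (P : C1Path s n) {t h : ℝ} (ht : t ∈ Icc (0 : ℝ) 1)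
    (hh : t + h ∈ Icc (0 : ℝ) 1) :
    InHs s fun x => h⁻¹ • (P.Γ (t + h) x - P.Γ t x) - P.V t x :=
  (((P.mem _ hh).1.sub (P.mem _ ht).1).smul _).sub (P.memV _ ht)

lemma path_contG {n : ℕ} {s : ℝ} (P : C1Path s n) : HsContOn s P.Γ (Icc 0 1) := by
  intro t ht
  have h1 := P.isDeriv t ht
  have hb : ∀ τ ∈ Icc (0 : ℝ) 1, τ ≠ t → HsNormSq s (fun x => P.Γ τ x - P.Γ t x) ≤
      2 * ((τ - t) ^ 2 * (HsNorm s fun x => (τ - t)⁻¹ • (P.Γ (t + (τ - t)) x - P.Γ t x) - P.V t x) ^ 2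
        + (-(τ - t)) ^ 2 * HsNormSq s (P.V t)) := by
    intro τ hτ hne
    have hm : t + (τ - t) ∈ Icc (0 : ℝ) 1 := by simpa using hτ
    have hS := path_slope_mem P ht hm
    have h2 := HsNormSq_sub (hS.smul (τ - t)) ((P.memV t ht).smul (-(τ - t)))
    have h3 := HsNormSq_smul (τ - t) hS
    have h4 := HsNormSq_smul (-(τ - t)) (P.memV t ht)
    have h5 : (fun x => (τ - t) • ((τ - t)⁻¹ • (P.Γ (t + (τ - t)) x - P.Γ t x) - P.V t x) -
        (-(τ - t)) • P.V t x) = fun x => P.Γ τ x - P.Γ t x := by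
      ext1 x
      have : τ - t ≠ 0 := sub_ne_zero.2 hne
      rw [smul_sub, smul_inv_smul₀ this, neg_smul, add_sub_cancel]
      abel
    rw [h5] at h2
    rw [HsNorm_sq]
    linarith
  have hsub : Tendsto (fun τ : ℝ => τ - t) (𝓝[Icc (0 : ℝ) 1 \ {t}] t)
      (𝓝[{h : ℝ | t + h ∈ Set.Icc (0 : ℝ) 1 ∧ h ≠ 0}] 0) := by
    apply tendsto_nhdsWithin_of_tendsto_nhds_of_eventually_within
    · have : Tendsto (fun τ : ℝ => τ - t) (𝓝 t) (𝓝 (t - t)) := (continuous_sub_right t).tendsto t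
      rw [sub_self] at this
      exact this.mono_left nhdsWithin_le_nhds
    · filter_upwards [self_mem_nhdsWithin] with τ hτ
      exact ⟨by simpa using hτ.1, sub_ne_zero.2 hτ.2⟩
  have h2 := h1.comp hsub
  have h0 : Tendsto (fun τ : ℝ => τ - t) (𝓝[Icc (0 : ℝ) 1 \ {t}] t) (𝓝 0) :=
    hsub.mono_right nhdsWithin_le_nhds
  have h3 : Tendsto (fun τ => 2 * ((τ - t) ^ 2 *
      (HsNorm s fun x => (τ - t)⁻¹ • (P.Γ (t + (τ - t)) x - P.Γ t x) - P.V t x) ^ 2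
        + (-(τ - t)) ^ 2 * HsNormSq s (P.V t))) (𝓝[Icc (0 : ℝ) 1 \ {t}] t) (𝓝 0) := by
    have := ((((h0.pow 2).mul (h2.pow 2)).add ((h0.neg.pow 2).mul_const (HsNormSq s (P.V t)))).const_mul 2)
    simpa [Function.comp_def] using this
  have h4 : Tendsto (fun τ => HsNormSq s (fun x => P.Γ τ x - P.Γ t x))
      (𝓝[Icc (0 : ℝ) 1 \ {t}] t) (𝓝 0) := by
    refine squeeze_zero' (Eventually.of_forall fun τ => HsNormSq_nonneg _ _) ?_ h3
    filter_upwards [self_mem_nhdsWithin] with τ hτ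
    exact hb τ hτ.1 hτ.2
  have h5 : Tendsto (fun τ => HsNorm s (fun x => P.Γ τ x - P.Γ t x))
      (𝓝[Icc (0 : ℝ) 1 \ {t}] t) (𝓝 0) := by
    have := (Real.continuous_sqrt.tendsto 0).comp h4
    rw [Real.sqrt_zero] at this
    exact this
  have h6 : HsNorm s (fun x => P.Γ t x - P.Γ t x) = 0 := by
    have := HsNormSq_smul 0 (P.memV t ht)
    have e : (fun x => P.Γ t x - P.Γ t x) = fun x => (0 : ℝ) • P.V t x := by ext1 x; simp
    have h7 := HsNormSq_nonneg s (fun x => (0 : ℝ) • P.V t x)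
    unfold HsNorm
    rw [e, Real.sqrt_eq_zero h7]
    linarith
  have h8 : 𝓝[Icc (0 : ℝ) 1] t ≤ 𝓝[insert t (Icc (0 : ℝ) 1 \ {t})] t :=
    nhdsWithin_mono _ (by intro x hx; by_cases h : x = t <;> simp_all)
  refine Tendsto.mono_left ?_ h8
  rw [nhdsWithin_insert, tendsto_sup]
  refine ⟨?_, h5⟩
  rw [tendsto_pure_left]
  intro S hS
  rw [h6]; exact mem_of_mem_nhds hS

/-- The analytic data of a path, clamped in time. -/
structure PData (s : ℝ) {n : ℕ} (A U : ℝ → ℝ → En n) : Prop where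
  cA : Continuous fun q : ℝ × ℝ => A q.1 q.2
  cA1 : Continuous fun q : ℝ × ℝ => deriv (A q.1) q.2
  cU : Continuous fun q : ℝ × ℝ => U q.1 q.2
  cU1 : Continuous fun q : ℝ × ℝ => deriv (U q.1) q.2
  mA : ∀ t, InM s (A t)
  mU : ∀ t, InHs s (U t)
  tA : ∀ t ∈ Ioo (0 : ℝ) 1, ∀ x, HasDerivAt (fun τ => A τ x) (U t x) t
  tA1 : ∀ t ∈ Ioo (0 : ℝ) 1, ∀ x, HasDerivAt (fun τ => deriv (A τ) x) (deriv (U t) x) t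
  bd : ∃ K, 0 ≤ K ∧ ∀ t, HsNorm s (A t) ≤ K ∧ HsNorm s (U t) ≤ K

lemma path_data {n : ℕ} {s : ℝ} (hs : 3 / 2 < s) (P : C1Path s n) :
    PData s (fun t => P.Γ (cl t)) (fun t => P.V (cl t)) := by
  obtain ⟨a1, a2⟩ := cont_of_Hs hs (fun t ht => (P.mem t ht).1) (path_contG P)
  obtain ⟨b1, b2⟩ := cont_of_Hs hs P.memV P.contV
  obtain ⟨K, hK⟩ := bdd_of_Hs (fun t ht => (P.mem t ht).1) (path_contG P)
  obtain ⟨L, hL⟩ := bdd_of_Hs P.memV P.contV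
  have hmem : ∀ t ∈ Ioo (0 : ℝ) 1, {h : ℝ | t + h ∈ Set.Icc (0 : ℝ) 1 ∧ h ≠ 0} ∈ 𝓝[≠] (0 : ℝ) := by
    intro t ht
    have h1 : {h : ℝ | t + h ∈ Set.Ioo (0 : ℝ) 1} ∈ 𝓝 (0 : ℝ) := by
      apply (isOpen_Ioo.preimage (continuous_const_add t)).mem_nhds
      simpa using ht
    filter_upwards [mem_nhdsWithin_of_mem_nhds h1, self_mem_nhdsWithin] with h h2 h3
    exact ⟨Ioo_subset_Icc_self h2, h3⟩
  have hlim : ∀ t ∈ Ioo (0 : ℝ) 1, Tendsto (fun h : ℝ => cK s * HsNorm s fun x =>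
      h⁻¹ • (P.Γ (t + h) x - P.Γ t x) - P.V t x) (𝓝[≠] 0) (𝓝 0) := by
    intro t ht
    have := ((P.isDeriv t (Ioo_subset_Icc_self ht)).mono_left
      (nhdsWithin_le_of_mem (hmem t ht))).const_mul (cK s)
    simpa using this
  have hev : ∀ t ∈ Ioo (0 : ℝ) 1, ∀ᶠ τ in 𝓝 t, cl τ = τ := by
    intro t ht
    filter_upwards [Icc_mem_nhds ht.1 ht.2] with τ hτ using cl_eq hτ
  refine ⟨a1, a2, b1, b2, fun t => P.mem _ (cl_mem t), fun t => P.memV _ (cl_mem t), ?_, ?_, ?_⟩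
  · intro t ht x
    have ht' := Ioo_subset_Icc_self ht
    have h1 : HasDerivAt (fun τ => P.Γ τ x) (P.V t x) t := by
      rw [hasDerivAt_iff_tendsto_slope_zero, tendsto_iff_norm_sub_tendsto_zero]
      refine squeeze_zero' (Eventually.of_forall fun _ => norm_nonneg _) ?_ (hlim t ht)
      filter_upwards [hmem t ht] with h hh
      exact le_Hs hs (path_slope_mem P ht' hh.1) x
    simp only [cl_eq ht']
    exact h1.congr_of_eventuallyEq (by filter_upwards [hev t ht] with τ hτ; rw [hτ])
  · intro t ht x
    have ht' := Ioo_subset_Icc_self ht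
    have h1 : HasDerivAt (fun τ => deriv (P.Γ τ) x) (deriv (P.V t) x) t := by
      rw [hasDerivAt_iff_tendsto_slope_zero, tendsto_iff_norm_sub_tendsto_zero]
      refine squeeze_zero' (Eventually.of_forall fun _ => norm_nonneg _) ?_ (hlim t ht)
      filter_upwards [hmem t ht] with h hh
      have h2 := deriv_le_Hs hs (path_slope_mem P ht' hh.1) x
      have e := (((P.mem _ hh.1).1.diff x).hasDerivAt.sub ((P.mem _ ht').1.diff x).hasDerivAt).const_smul
        (h⁻¹) |>.sub ((P.memV t ht').diff x).hasDerivAt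
      have e' := e.deriv
      rw [← e']
      exact h2
    simp only [cl_eq ht']
    exact h1.congr_of_eventuallyEq (by filter_upwards [hev t ht] with τ hτ; rw [hτ])
  · refine ⟨Real.sqrt (max K L), Real.sqrt_nonneg _, fun t => ⟨?_, ?_⟩⟩
    · exact Real.sqrt_le_sqrt ((hK _ (cl_mem t)).trans (le_max_left _ _))
    · exact Real.sqrt_le_sqrt ((hL _ (cl_mem t)).trans (le_max_right _ _))

lemma inj_int {n : ℕ} {γ : ℝ → En n} (hp : Function.Periodic γ 1) (hi : InjOn γ I01) {a b : ℝ}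
    (h : γ a = γ b) : ∃ k : ℤ, a = b + k := by
  have hf : ∀ x, γ (Int.fract x) = γ x := fun x => by
    have := hp.sub_zsmul_eq (x := x) ⌊x⌋
    rw [zsmul_eq_mul, mul_one] at this
    exact this
  have h1 : Int.fract a = Int.fract b :=
    hi ⟨Int.fract_nonneg _, Int.fract_lt_one _⟩ ⟨Int.fract_nonneg _, Int.fract_lt_one _⟩
      (by rw [hf, hf, h])
  refine ⟨⌊a⌋ - ⌊b⌋, ?_⟩
  unfold Int.fract at h1
  push_cast; linarith

lemma delta_eq {n : ℕ} {s : ℝ} {u : ℝ → En n} (hu : InHs s u) (x w : ℝ) :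
    u (x + w) - u x = w • ∫ θ in I01, deriv u (x + θ * w) := by
  have h := intervalIntegral.integral_unitInterval_deriv_eq_sub (𝕜 := ℝ) (f := u) (f' := deriv u) (z₀ := x) (z₁ := w)
    (by have := hu.contD; fun_prop) (fun t _ => (hu.diff _).hasDerivAt)
  rw [← h, intervalIntegral.integral_of_le zero_le_one, I01, integral_Ico_eq_integral_Ioc]
  simp

lemma unif_bilip {n : ℕ} {s : ℝ} {A U : ℝ → ℝ → En n} (D : PData s A U) :
    ∃ c, 0 < c ∧ ∀ t ∈ Icc (0 : ℝ) 1, (∀ x, ∀ w ∈ Jh, c * |w| ≤ ‖A t (x + w) - A t x‖) ∧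
      ∀ x, c ≤ ‖deriv (A t) x‖ := by
  let q : ℝ × ℝ × ℝ → En n := fun p => ∫ θ in (0 : ℝ)..1, deriv (A p.1) (p.2.1 + θ * p.2.2)
  have hq : Continuous q := by
    apply intervalIntegral.continuous_parametric_intervalIntegral_of_continuous'
    have := D.cA1.comp (f := fun r : (ℝ × ℝ × ℝ) × ℝ => (r.1.1, r.1.2.1 + r.2 * r.1.2.2)) (by fun_prop)
    exact this
  have hqe : ∀ t x w, A t (x + w) - A t x = w • q (t, x, w) := fun t x w => by
    rw [delta_eq (D.mA t).1, I01, integral_Ico_eq_integral_Ioc,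
      ← intervalIntegral.integral_of_le zero_le_one]
  have hq0 : ∀ t x, q (t, x, 0) = deriv (A t) x := fun t x => by simp [q]
  have hcomp : IsCompact (Icc (0 : ℝ) 1 ×ˢ (Icc (0 : ℝ) 1 ×ˢ Icc (-(1 / 2) : ℝ) (1 / 2))) :=
    isCompact_Icc.prod (isCompact_Icc.prod isCompact_Icc)
  have hne : (Icc (0 : ℝ) 1 ×ˢ (Icc (0 : ℝ) 1 ×ˢ Icc (-(1 / 2) : ℝ) (1 / 2))).Nonempty :=
    ⟨(0, 0, 0), by norm_num⟩
  obtain ⟨p, hp, hmin⟩ := hcomp.exists_isMinOn hne hq.norm.continuousOn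
  refine ⟨‖q p‖, ?_, ?_⟩
  · rw [norm_pos_iff]
    obtain ⟨t, x, w⟩ := p
    obtain ⟨-, -, hw⟩ := hp
    simp only at hw
    rcases eq_or_ne w 0 with rfl | hw0
    · rw [hq0]; exact (D.mA t).2.2 x
    · intro h0
      have h1 := hqe t x w
      rw [h0, smul_zero, sub_eq_zero] at h1
      obtain ⟨k, hk⟩ := inj_int (D.mA t).1.1 (D.mA t).2.1 h1
      have hk' : w = k := by linarith
      rw [hk'] at hw
      have a1 : (-1 : ℝ) < k := by linarith [hw.1]
      have a2 : (k : ℝ) < 1 := by linarith [hw.2]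
      have a1' : -1 < k := by exact_mod_cast a1
      have a2' : k < 1 := by exact_mod_cast a2
      have : k = 0 := by omega
      rw [this] at hk'; exact hw0 (by simpa using hk')
  · intro t ht
    have hall : ∀ x, ∀ w ∈ Icc (-(1 / 2) : ℝ) (1 / 2), ‖q p‖ ≤ ‖q (t, x, w)‖ := by
      intro x w hw
      have hper : Function.Periodic (fun x => q (t, x, w)) 1 := fun x => by
        simp only [q]
        congr 1; ext1 θ
        rw [show x + 1 + θ * w = x + θ * w + 1 by ring]
        exact per_deriv (D.mA t).1.1 _
      obtain ⟨y, hy, hxy⟩ := hper.exists_mem_Ico₀ one_pos x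
      rw [hxy]
      exact hmin (show (t, y, w) ∈ _ from ⟨ht, Ico_subset_Icc_self hy, hw⟩)
    constructor
    · intro x w hw
      rw [hqe, norm_smul, mul_comm, Real.norm_eq_abs]
      exact mul_le_mul_of_nonneg_left (hall x w (Ioc_subset_Icc_self hw)) (abs_nonneg _)
    · intro x
      rw [← hq0]; exact hall x 0 (by norm_num)

lemma gag_Jh {n : ℕ} (σ : ℝ) {v : ℝ → En n} (hp : Function.Periodic v 1) :
    gagliardoSqE σ v = ∫⁻ x in I01, ∫⁻ w in Jh, gK σ v x (x + w) := by
  rw [gag_eq]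
  congr 1; ext1 x
  apply lint_periodic
  intro y
  unfold gK
  rw [hp, dT_add_one]

lemma gag_tri {n : ℕ} (σ : ℝ) {v : ℝ → En n} (hv : Continuous v) (hp : Function.Periodic v 1) :
    ∫⁻ x in I01, ∫⁻ w in Jh, ∫⁻ θ in I01, ENNReal.ofReal θ * gK σ v x (x + θ * w) ≤
      gagliardoSqE σ v := by
  rw [gag_Jh σ hp]
  refine lintegral_mono fun x => ?_
  have hm : Measurable fun p : ℝ × ℝ => ENNReal.ofReal p.2 * gK σ v x (x + p.2 * p.1) := by
    apply (ENNReal.measurable_ofReal.comp measurable_snd).mul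
    exact (gK_meas σ hv).comp (f := fun p : ℝ × ℝ => (x, x + p.2 * p.1)) (by fun_prop)
  simp only
  rw [lintegral_lintegral_swap hm.aemeasurable]
  have h1 : ∀ θ ∈ I01, ∫⁻ w in Jh, ENNReal.ofReal θ * gK σ v x (x + θ * w) ≤
      ∫⁻ w in Jh, gK σ v x (x + w) := by
    intro θ hθ
    rw [lintegral_const_mul' _ _ ENNReal.ofReal_ne_top]
    rcases eq_or_lt_of_le hθ.1 with h0 | h0
    · rw [← h0]; simp
    · have hm' : Measurable fun z => gK σ v x (x + z) :=
        (gK_meas σ hv).comp (f := fun z : ℝ => (x, x + z)) (by fun_prop)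
      exact lint_scale _ hm' h0 hθ.2.le
  refine (setLIntegral_mono' meas_I01 h1).trans ?_
  rw [lintegral_const, vol_I01', mul_one]

/-- hypotheses of quantitative regularity -/
structure QReg {n : ℕ} (s c K : ℝ) (γ : ℝ → En n) : Prop where
  mem : InHs s γ
  cpos : 0 < c
  bl : ∀ x, ∀ w ∈ Jh, c * |w| ≤ ‖γ (x + w) - γ x‖
  lo : ∀ x, c ≤ ‖deriv γ x‖
  hi : ∀ x, ‖deriv γ x‖ ≤ K

/-- the bracket -/
def brk {n : ℕ} (γ u : ℝ → En n) (x z : ℝ) : En n :=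
  (deriv u (x + z) - deriv u x) -
    ((‖deriv γ x‖ ^ 2)⁻¹ * ⟪deriv γ x, deriv γ (x + z) - deriv γ x⟫) • deriv u x

lemma brk_int {n : ℕ} {s : ℝ} {γ u : ℝ → En n} (hγ : InHs s γ) (hu : InHs s u) {x : ℝ}
    (hx : deriv γ x ≠ 0) (w : ℝ) :
    u (x + w) - u x - DDg γ u x (γ (x + w) - γ x) = w • ∫ θ in I01, brk γ u x (θ * w) := by
  have h1 := hγ.contD
  have h2 := hu.contD
  have hne : ‖deriv γ x‖ ^ 2 ≠ 0 := by positivity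
  have e : ∀ θ : ℝ, brk γ u x (θ * w) = deriv u (x + θ * w) -
      DDg γ u x (deriv γ (x + θ * w)) := fun θ => by
    unfold brk DDg
    rw [inner_sub_right, real_inner_self_eq_norm_sq, mul_sub, inv_mul_cancel₀ hne, sub_smul, one_smul]
    abel
  let L : En n →L[ℝ] En n :=
    (ContinuousLinearMap.smulRight ((‖deriv γ x‖ ^ 2)⁻¹ • innerSL ℝ (deriv γ x)) (deriv u x))
  have hL : ∀ z, DDg γ u x z = L z := fun z => by simp [L, DDg]
  simp_rw [e, hL]
  rw [integral_sub (intI01 (by fun_prop)) (intI01 (by fun_prop)),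
    L.integral_comp_comm (intI01 (by fun_prop)), delta_eq hu, delta_eq hγ, smul_sub, map_smul]

lemma brk_norm {n : ℕ} {s c K L : ℝ} {γ u : ℝ → En n} (Q : QReg s c K γ)
    (hL : ∀ x, ‖deriv u x‖ ≤ L) (x z : ℝ) :
    ‖brk γ u x z‖ ^ 2 ≤ 2 * (1 + (L / c) ^ 2) *
      (‖deriv u (x + z) - deriv u x‖ ^ 2 + ‖deriv γ (x + z) - deriv γ x‖ ^ 2) := by
  set a := ‖deriv u (x + z) - deriv u x‖ with ha
  set b := ‖deriv γ (x + z) - deriv γ x‖ with hb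
  have hc := Q.cpos
  have hlo := Q.lo x
  have hpos : 0 < ‖deriv γ x‖ := hc.trans_le hlo
  have hL0 : 0 ≤ L := (norm_nonneg _).trans (hL x)
  have h1 : ‖brk γ u x z‖ ≤ a + (L / c) * b := by
    unfold brk
    refine (norm_sub_le _ _).trans ?_
    gcongr
    rw [norm_smul, norm_mul, norm_inv, norm_pow, norm_norm]
    calc (‖deriv γ x‖ ^ 2)⁻¹ * ‖⟪deriv γ x, deriv γ (x + z) - deriv γ x⟫‖ * ‖deriv u x‖
        ≤ (‖deriv γ x‖ ^ 2)⁻¹ * (‖deriv γ x‖ * b) * L := by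
          gcongr
          · exact norm_inner_le_norm _ _
          · exact hL x
      _ = (L / ‖deriv γ x‖) * b := by field_simp
      _ ≤ (L / c) * b := by gcongr
  have h2 := pow_le_pow_left₀ (norm_nonneg _) h1 2
  nlinarith [sq_nonneg (a - (L / c) * b), sq_nonneg a, sq_nonneg b, mul_nonneg (sq_nonneg (L / c)) (sq_nonneg a)]

lemma Rop_eq {n : ℕ} (s : ℝ) (γ u : ℝ → En n) (x y : ℝ) :
    ‖Rop s γ u x y‖ ^ 2 * muW γ x y = ‖u y - u x - DDg γ u x (γ y - γ x)‖ ^ 2 *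
      ((‖γ y - γ x‖ ^ s)⁻¹ ^ 2 * (‖deriv γ x‖ * ‖deriv γ y‖ / ‖γ y - γ x‖)) := by
  unfold Rop muW
  rw [norm_smul, norm_inv, Real.norm_of_nonneg (Real.rpow_nonneg (norm_nonneg _) _)]
  ring

lemma wt_bound {n : ℕ} {s c K : ℝ} (hs : 3 / 2 < s) {γ : ℝ → En n} (Q : QReg s c K γ) {x w : ℝ} (hw : w ∈ Jh)
    (hw0 : w ≠ 0) :
    (‖γ (x + w) - γ x‖ ^ s)⁻¹ ^ 2 * (‖deriv γ x‖ * ‖deriv γ (x + w)‖ / ‖γ (x + w) - γ x‖) ≤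
      (K ^ 2 / c ^ (2 * s + 1)) * (w ^ 2 * |w| ^ (2 * s - 1))⁻¹ := by
  have hc := Q.cpos
  have hwp : 0 < |w| := abs_pos.2 hw0
  have hd : 0 < c * |w| := by positivity
  have hK : 0 ≤ K := (norm_nonneg _).trans (Q.hi 0)
  calc _ ≤ ((c * |w|) ^ s)⁻¹ ^ 2 * (K * K / (c * |w|)) := by
        gcongr
        · exact Q.bl x w hw
        · exact Q.hi _
        · exact Q.hi _
        · exact Q.bl x w hw
    _ = _ := by
        have e1 : c ^ (2 * s + 1) = c ^ s * c ^ s * c := by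
          rw [two_mul, Real.rpow_add hc, Real.rpow_add hc, Real.rpow_one]
        have e2 : w ^ 2 * |w| ^ (2 * s - 1) = |w| ^ s * |w| ^ s * |w| := by
          rw [← sq_abs w, ← Real.rpow_two, ← Real.rpow_add hwp, ← Real.rpow_add hwp,
            ← Real.rpow_add_one hwp.ne']
          congr 1; ring
        rw [e1, e2, Real.mul_rpow hc.le hwp.le]
        have : 0 < c ^ s := by positivity
        have : 0 < |w| ^ s := by positivity
        field_simp

lemma gK_theta {n : ℕ} {s : ℝ} (hs : 3 / 2 < s) (v : ℝ → En n) {x w θ : ℝ} (hw : w ∈ Jh) (hw0 : w ≠ 0)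
    (hθ : θ ∈ I01) :
    ENNReal.ofReal (‖v (x + θ * w) - v x‖ ^ 2) ≤
      ENNReal.ofReal (|w| ^ (2 * s - 1)) * (ENNReal.ofReal θ * gK (s - 1) v x (x + θ * w)) := by
  rcases eq_or_lt_of_le hθ.1 with h0 | h0
  · rw [← h0]; simp
  have hm : θ * w ∈ Jh := by
    obtain ⟨a, b⟩ := hw
    obtain ⟨c, d⟩ := hθ
    constructor <;> nlinarith
  unfold gK
  have hwp : 0 < |w| := abs_pos.2 hw0
  rw [dT_add _ _ hm, ← ENNReal.ofReal_mul hθ.1, ← ENNReal.ofReal_mul (by positivity)]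
  apply ENNReal.ofReal_le_ofReal
  have e : 2 * (s - 1) + 1 = 2 * s - 1 := by ring
  rw [e, abs_mul, abs_of_pos h0, Real.mul_rpow h0.le hwp.le]
  have h1 : θ ^ (2 * s - 1) ≤ θ := by
    calc θ ^ (2 * s - 1) ≤ θ ^ (1 : ℝ) :=
          Real.rpow_le_rpow_of_exponent_ge h0 hθ.2.le (by linarith)
      _ = θ := Real.rpow_one θ
  have h2 : 0 < θ ^ (2 * s - 1) := by positivity
  have h3 : 0 < |w| ^ (2 * s - 1) := by positivity
  rw [mul_div_assoc', mul_div_assoc', le_div_iff₀ (by positivity)]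
  have := sq_nonneg ‖v (x + θ * w) - v x‖
  calc _ = θ ^ (2 * s - 1) * (|w| ^ (2 * s - 1) * ‖v (x + θ * w) - v x‖ ^ 2) := by ring
    _ ≤ θ * (|w| ^ (2 * s - 1) * ‖v (x + θ * w) - v x‖ ^ 2) := by gcongr
    _ = _ := by ring

/-- constant in the key estimate -/
def kC (s c K L : ℝ) : ℝ := (K ^ 2 / c ^ (2 * s + 1)) * (2 * (1 + (L / c) ^ 2))

lemma kp {n : ℕ} {s c K L : ℝ} (hs : 3 / 2 < s) {γ u : ℝ → En n} (Q : QReg s c K γ) (hu : InHs s u)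
    (hL : ∀ x, ‖deriv u x‖ ≤ L) {x w : ℝ} (hw : w ∈ Jh) :
    ENNReal.ofReal (‖Rop s γ u x (x + w)‖ ^ 2 * muW γ x (x + w)) ≤ ENNReal.ofReal (kC s c K L) *
      ∫⁻ θ in I01, (ENNReal.ofReal θ * gK (s - 1) (deriv u) x (x + θ * w) +
        ENNReal.ofReal θ * gK (s - 1) (deriv γ) x (x + θ * w)) := by
  rcases eq_or_ne w 0 with rfl | hw0
  · simp [Rop, DDg]
  have hc := Q.cpos
  have hK : 0 ≤ K := (norm_nonneg _).trans (Q.hi 0)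
  have hx : deriv γ x ≠ 0 := norm_pos_iff.1 (hc.trans_le (Q.lo x))
  have hwp : 0 < |w| := abs_pos.2 hw0
  set Z := ∫⁻ θ in I01, (ENNReal.ofReal θ * gK (s - 1) (deriv u) x (x + θ * w) +
        ENNReal.ofReal θ * gK (s - 1) (deriv γ) x (x + θ * w)) with hZ
  have hbc : Continuous fun θ : ℝ => brk γ u x (θ * w) := by
    have := hu.contD
    have := Q.mem.contD
    unfold brk; fun_prop
  have h1 : ‖∫ θ in I01, brk γ u x (θ * w)‖ₑ ^ 2 ≤
      ENNReal.ofReal (2 * (1 + (L / c) ^ 2) * |w| ^ (2 * s - 1)) * Z := by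
    calc _ ≤ (∫⁻ θ in I01, ‖brk γ u x (θ * w)‖ₑ) ^ 2 := by
          gcongr; exact enorm_integral_le_lintegral_enorm _
      _ ≤ ∫⁻ θ in I01, ‖brk γ u x (θ * w)‖ₑ ^ 2 :=
          lint_sq_le _ vol_I01'.le _ hbc.measurable.enorm.aemeasurable
      _ ≤ _ := by
          rw [hZ, ← lintegral_const_mul' _ _ ENNReal.ofReal_ne_top]
          refine setLIntegral_mono' meas_I01 fun θ hθ => ?_
          have h2 := brk_norm Q hL x (θ * w)
          have h3 := gK_theta hs (deriv u) (x := x) hw hw0 hθ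
          have h4 := gK_theta hs (deriv γ) (x := x) hw hw0 hθ
          rw [← ofReal_norm, ← ENNReal.ofReal_pow (norm_nonneg _), ENNReal.ofReal_mul (by positivity),
            mul_assoc]
          refine (ENNReal.ofReal_le_ofReal h2).trans ?_
          rw [ENNReal.ofReal_mul (by positivity), ENNReal.ofReal_add (by positivity) (by positivity)]
          gcongr
          rw [mul_add]
          exact add_le_add h3 h4
  rw [Rop_eq, brk_int Q.mem hu hx, norm_smul, ENNReal.ofReal_mul (by positivity), mul_pow,
    ENNReal.ofReal_mul (by positivity), Real.norm_eq_abs, sq_abs,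
    ENNReal.ofReal_pow (norm_nonneg _), ofReal_norm]
  have h5 := wt_bound hs Q (x := x) hw hw0
  calc _ ≤ ENNReal.ofReal (w ^ 2) * (ENNReal.ofReal (2 * (1 + (L / c) ^ 2) * |w| ^ (2 * s - 1)) * Z) *
        ENNReal.ofReal ((K ^ 2 / c ^ (2 * s + 1)) * (w ^ 2 * |w| ^ (2 * s - 1))⁻¹) := by gcongr
    _ = ENNReal.ofReal (w ^ 2) * ENNReal.ofReal (2 * (1 + (L / c) ^ 2) * |w| ^ (2 * s - 1)) *
        ENNReal.ofReal ((K ^ 2 / c ^ (2 * s + 1)) * (w ^ 2 * |w| ^ (2 * s - 1))⁻¹) * Z := by ring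
    _ = _ := by
      rw [← ENNReal.ofReal_mul (by positivity), ← ENNReal.ofReal_mul (by positivity)]
      congr 2
      unfold kC
      have : 0 < |w| ^ (2 * s - 1) := by positivity
      field_simp

lemma meas_slice {β : Type*} [MeasurableSpace β] {F : ℝ × β → ℝ≥0∞} (h : Measurable F) (x : ℝ) :
    Measurable fun w => F (x, w) := h.comp measurable_prodMk_left

lemma key_R {n : ℕ} {s c K L : ℝ} (hs : 3 / 2 < s) {γ u : ℝ → En n} (Q : QReg s c K γ) (hu : InHs s u)
    (hL : ∀ x, ‖deriv u x‖ ≤ L) :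
    ∫⁻ x in I01, ∫⁻ y in I01, ENNReal.ofReal (‖Rop s γ u x y‖ ^ 2 * muW γ x y) ≤
      ENNReal.ofReal (kC s c K L) *
        (gagliardoSqE (s - 1) (deriv u) + gagliardoSqE (s - 1) (deriv γ)) := by
  have h1 : ∀ x, ∫⁻ y in I01, ENNReal.ofReal (‖Rop s γ u x y‖ ^ 2 * muW γ x y) =
      ∫⁻ w in Jh, ENNReal.ofReal (‖Rop s γ u x (x + w)‖ ^ 2 * muW γ x (x + w)) := fun x => by
    apply lint_periodic
    intro y
    beta_reduce
    rw [Rop_eq, Rop_eq, Q.mem.1, hu.1, per_deriv Q.mem.1]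
  simp_rw [h1]
  refine (lint2_le_const _ _ ENNReal.ofReal_ne_top meas_I01 measurableSet_Ioc
    fun x _ w hw => kp hs Q hu hL hw).trans ?_
  gcongr
  have hm : ∀ v : ℝ → En n, Continuous v → Measurable fun p : (ℝ × ℝ) × ℝ =>
      ENNReal.ofReal p.2 * gK (s - 1) v p.1.1 (p.1.1 + p.2 * p.1.2) := fun v hv => by
    apply (ENNReal.measurable_ofReal.comp measurable_snd).mul
    exact (gK_meas (s - 1) hv).comp
      (f := fun p : (ℝ × ℝ) × ℝ => (p.1.1, p.1.1 + p.2 * p.1.2)) (by fun_prop)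
  have hmu := hm _ hu.contD
  have hm1 : ∀ x w, Measurable fun θ : ℝ => ENNReal.ofReal θ * gK (s - 1) (deriv u) x (x + θ * w) :=
    fun x w => ENNReal.measurable_ofReal.mul
      ((gK_meas (s - 1) hu.contD).comp (f := fun θ : ℝ => (x, x + θ * w)) (by fun_prop))
  have hm2 : Measurable fun p : ℝ × ℝ => ∫⁻ θ in I01,
      ENNReal.ofReal θ * gK (s - 1) (deriv u) p.1 (p.1 + θ * p.2) := hmu.lintegral_prod_right'
  have hm2' : ∀ x, Measurable fun w : ℝ => ∫⁻ θ in I01,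
      ENNReal.ofReal θ * gK (s - 1) (deriv u) x (x + θ * w) := fun x => meas_slice hm2 x
  have hm3 : Measurable fun x : ℝ => ∫⁻ w in Jh, ∫⁻ θ in I01,
      ENNReal.ofReal θ * gK (s - 1) (deriv u) x (x + θ * w) := hm2.lintegral_prod_right'
  have e1 : ∀ x, ∀ w, (∫⁻ θ in I01, (ENNReal.ofReal θ * gK (s - 1) (deriv u) x (x + θ * w) +
        ENNReal.ofReal θ * gK (s - 1) (deriv γ) x (x + θ * w))) =
      (∫⁻ θ in I01, ENNReal.ofReal θ * gK (s - 1) (deriv u) x (x + θ * w)) +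
      ∫⁻ θ in I01, ENNReal.ofReal θ * gK (s - 1) (deriv γ) x (x + θ * w) := fun x w =>
    lintegral_add_left (hm1 x w) _
  have e2 : ∀ x, ∫⁻ w in Jh, ((∫⁻ θ in I01, ENNReal.ofReal θ * gK (s - 1) (deriv u) x (x + θ * w)) +
      ∫⁻ θ in I01, ENNReal.ofReal θ * gK (s - 1) (deriv γ) x (x + θ * w)) =
      (∫⁻ w in Jh, ∫⁻ θ in I01, ENNReal.ofReal θ * gK (s - 1) (deriv u) x (x + θ * w)) +
      ∫⁻ w in Jh, ∫⁻ θ in I01, ENNReal.ofReal θ * gK (s - 1) (deriv γ) x (x + θ * w) := fun x =>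
    lintegral_add_left (hm2' x) _
  refine le_of_eq_of_le (lintegral_congr fun x => (lintegral_congr fun w => e1 x w).trans (e2 x)) ?_
  rw [lintegral_add_left hm3]
  exact add_le_add (gag_tri _ hu.contD (per_deriv hu.1)) (gag_tri _ Q.mem.contD (per_deriv Q.mem.1))

/-- weight -/
def Wv {n : ℕ} (s : ℝ) (d a b : En n) : ℝ := (‖d‖ ^ s)⁻¹ ^ 2 * (‖a‖ * ‖b‖ / ‖d‖)

/-- remainder -/
def Nv {n : ℕ} (d a δ α : En n) : En n := δ - ((‖a‖ ^ 2)⁻¹ * ⟪a, d⟫) • α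

/-- energy density -/
def ee {n : ℕ} (s : ℝ) (d a b : En n) : ℝ := ‖Nv d a d a‖ ^ 2 * Wv s d a b

/-- metric density, first part -/
def g1 {n : ℕ} (s : ℝ) (d a b δ α : En n) : ℝ := ‖Nv d a δ α‖ ^ 2 * Wv s d a b
/-- metric density, second part -/
def g2 {n : ℕ} (s : ℝ) (d a b δ : En n) : ℝ := ee s d a b * (‖δ‖ ^ 2 / ‖d‖ ^ 2)
/-- metric density, third part -/
def g3 {n : ℕ} (s : ℝ) (d a b α β : En n) : ℝ :=
  ee s d a b * (‖α‖ ^ 2 / ‖a‖ ^ 2 + ‖β‖ ^ 2 / ‖b‖ ^ 2)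

/-- metric density -/
def gg {n : ℕ} (s : ℝ) (d a b δ α β : En n) : ℝ :=
  2 * g1 s d a b δ α + (2 * s + 1) * g2 s d a b δ + g3 s d a b α β

lemma Wv_nonneg {n : ℕ} (s : ℝ) (d a b : En n) : 0 ≤ Wv s d a b := by unfold Wv; positivity
lemma ee_nonneg {n : ℕ} (s : ℝ) (d a b : En n) : 0 ≤ ee s d a b :=
  mul_nonneg (by positivity) (Wv_nonneg _ _ _ _)
lemma g1_nonneg {n : ℕ} (s : ℝ) (d a b δ α : En n) : 0 ≤ g1 s d a b δ α :=
  mul_nonneg (by positivity) (Wv_nonneg _ _ _ _)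
lemma g2_nonneg {n : ℕ} (s : ℝ) (d a b δ : En n) : 0 ≤ g2 s d a b δ :=
  mul_nonneg (ee_nonneg _ _ _ _) (by positivity)
lemma g3_nonneg {n : ℕ} (s : ℝ) (d a b α β : En n) : 0 ≤ g3 s d a b α β :=
  mul_nonneg (ee_nonneg _ _ _ _) (by positivity)

lemma gg_nonneg {n : ℕ} {s : ℝ} (hs : 3 / 2 < s) (d a b δ α β : En n) : 0 ≤ gg s d a b δ α β := by
  have := g1_nonneg s d a b δ α
  have := g2_nonneg s d a b δ
  have := g3_nonneg s d a b α β
  unfold gg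
  have : 0 ≤ 2 * s + 1 := by linarith
  positivity

/-- derivative of the energy density -/
def ed {n : ℕ} (s : ℝ) (d a b δ α β : En n) : ℝ :=
  Wv s d a b * (2 * ⟪Nv d a d a, Nv d a δ α⟫ + ‖Nv d a d a‖ ^ 2 *
    (-(2 * s + 1) * (⟪d, δ⟫ / ‖d‖ ^ 2) + ⟪a, α⟫ / ‖a‖ ^ 2 + ⟪b, β⟫ / ‖b‖ ^ 2))

lemma cs4 {p : ℝ} (hp : 0 ≤ p) (m X Y Z : ℝ) : (2 * m + p * X + Y + Z) ^ 2 ≤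
      (4 + p) * (2 * m ^ 2 + p * X ^ 2 + Y ^ 2 + Z ^ 2) := by
  have h : (4 + p) * (2 * m ^ 2 + p * X ^ 2 + Y ^ 2 + Z ^ 2) - (2 * m + p * X + Y + Z) ^ 2 =
      2 * p * (m - X) ^ 2 + 2 * (m - Y) ^ 2 + 2 * (m - Z) ^ 2 + p * (X - Y) ^ 2 + p * (X - Z) ^ 2 +
        (Y - Z) ^ 2 := by ring
  have h2 : 0 ≤ 2 * p * (m - X) ^ 2 + 2 * (m - Y) ^ 2 + 2 * (m - Z) ^ 2 + p * (X - Y) ^ 2 +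
    p * (X - Z) ^ 2 + (Y - Z) ^ 2 := by positivity
  linarith

lemma ed_sq_le {n : ℕ} {s : ℝ} (hs : 3 / 2 < s) (d a b δ α β : En n) :
    ed s d a b δ α β ^ 2 ≤ (4 + (2 * s + 1)) * ee s d a b * gg s d a b δ α β := by
  set N := Nv d a d a with hN
  set M := Nv d a δ α with hM
  set W := Wv s d a b with hW
  have hW0 : 0 ≤ W := Wv_nonneg _ _ _ _
  have frac : ∀ p q : En n, |⟪p, q⟫ / ‖p‖ ^ 2| ≤ ‖q‖ / ‖p‖ := fun p q => by
    rcases eq_or_ne p 0 with rfl | hp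
    · simp
    have : 0 < ‖p‖ := norm_pos_iff.2 hp
    rw [abs_div, abs_of_nonneg (by positivity : 0 ≤ ‖p‖ ^ 2), div_le_div_iff₀ (by positivity) this]
    have := abs_real_inner_le_norm p q
    nlinarith
  have h0 := abs_real_inner_le_norm N M
  have h1 := frac d δ
  have h2 := frac a α
  have h3 := frac b β
  set q := ‖δ‖ / ‖d‖
  set r := ‖α‖ / ‖a‖
  set t := ‖β‖ / ‖b‖
  have hq : ‖δ‖ ^ 2 / ‖d‖ ^ 2 = q ^ 2 := by rw [div_pow]
  have hr : ‖α‖ ^ 2 / ‖a‖ ^ 2 = r ^ 2 := by rw [div_pow]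
  have ht : ‖β‖ ^ 2 / ‖b‖ ^ 2 = t ^ 2 := by rw [div_pow]
  set k := ‖N‖
  set m := ‖M‖
  have hk : 0 ≤ k := norm_nonneg _
  have hm : 0 ≤ m := norm_nonneg _
  have hp : 0 ≤ 2 * s + 1 := by linarith
  set p := 2 * s + 1
  have e1 : ed s d a b δ α β = W * (2 * ⟪N, M⟫ + k ^ 2 *
    (-p * (⟪d, δ⟫ / ‖d‖ ^ 2) + ⟪a, α⟫ / ‖a‖ ^ 2 + ⟪b, β⟫ / ‖b‖ ^ 2)) := rfl
  have e2 : ee s d a b = k ^ 2 * W := rfl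
  have e3 : gg s d a b δ α β = 2 * (m ^ 2 * W) + p * (k ^ 2 * W * q ^ 2) +
      k ^ 2 * W * (r ^ 2 + t ^ 2) := by
    unfold gg g1 g2 g3
    rw [hq, hr, ht, e2]
  rw [e1, e2, e3]
  have hb : |2 * ⟪N, M⟫ + k ^ 2 *
    (-p * (⟪d, δ⟫ / ‖d‖ ^ 2) + ⟪a, α⟫ / ‖a‖ ^ 2 + ⟪b, β⟫ / ‖b‖ ^ 2)| ≤
      k * (2 * m + p * (k * q) + k * r + k * t) := by
    have hk2 : 0 ≤ k ^ 2 := by positivity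
    calc _ ≤ |2 * ⟪N, M⟫| + |k ^ 2 *
        (-p * (⟪d, δ⟫ / ‖d‖ ^ 2) + ⟪a, α⟫ / ‖a‖ ^ 2 + ⟪b, β⟫ / ‖b‖ ^ 2)| := abs_add_le _ _
      _ ≤ 2 * (k * m) + k ^ 2 * (p * q + r + t) := by
        rw [abs_mul, abs_mul, abs_of_nonneg hk2, abs_two]
        gcongr
        refine (abs_add_le _ _).trans ?_
        gcongr
        refine (abs_add_le _ _).trans ?_
        gcongr
        rw [abs_mul, abs_neg, abs_of_nonneg hp]
        gcongr
      _ = _ := by ring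
  have hsq := pow_le_pow_left₀ (abs_nonneg _) hb 2
  rw [sq_abs] at hsq
  have cs : (2 * m + p * (k * q) + k * r + k * t) ^ 2 ≤
      (4 + p) * (2 * m ^ 2 + p * (k * q) ^ 2 + (k * r) ^ 2 + (k * t) ^ 2) := by
    exact cs4 hp _ _ _ _
  rw [mul_pow]
  calc _ ≤ W ^ 2 * (k * (2 * m + p * (k * q) + k * r + k * t)) ^ 2 := by gcongr
    _ = W ^ 2 * k ^ 2 * (2 * m + p * (k * q) + k * r + k * t) ^ 2 := by ring
    _ ≤ W ^ 2 * k ^ 2 * ((4 + p) * (2 * m ^ 2 + p * (k * q) ^ 2 + (k * r) ^ 2 + (k * t) ^ 2)) := by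
      gcongr
    _ = _ := by ring

lemma hasDeriv_norm {n : ℕ} {f : ℝ → En n} {f' : En n} {t : ℝ} (hf : HasDerivAt f f' t) (h0 : f t ≠ 0) :
    HasDerivAt (fun r => ‖f r‖) (‖f t‖ * (⟪f t, f'⟫ / ‖f t‖ ^ 2)) t := by
  have hp : 0 < ‖f t‖ := norm_pos_iff.2 h0
  have h1 := hf.norm_sq.sqrt (by positivity)
  have e : (fun r => √(‖f r‖ ^ 2)) = fun r => ‖f r‖ := by
    ext r; exact Real.sqrt_sq (norm_nonneg _)
  rw [e, Real.sqrt_sq hp.le] at h1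
  convert h1 using 1
  field_simp

lemma Nv_sq {n : ℕ} (d a : En n) (ha : a ≠ 0) :
    ‖Nv d a d a‖ ^ 2 = ‖d‖ ^ 2 - ⟪a, d⟫ ^ 2 * (‖a‖ ^ 2)⁻¹ := by
  have : ‖a‖ ≠ 0 := norm_ne_zero_iff.2 ha
  unfold Nv
  rw [norm_sub_sq_real, norm_smul, inner_smul_right, mul_pow, Real.norm_eq_abs, sq_abs,
    real_inner_comm]
  field_simp
  ring

lemma Nv_inner {n : ℕ} (d a δ α : En n) :
    ⟪Nv d a d a, Nv d a δ α⟫ = ⟪d, δ⟫ - (‖a‖ ^ 2)⁻¹ * ⟪a, d⟫ * (⟪a, δ⟫ + ⟪d, α⟫)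
      + ((‖a‖ ^ 2)⁻¹ * ⟪a, d⟫) ^ 2 * ⟪a, α⟫ := by
  unfold Nv
  simp only [inner_sub_left, inner_sub_right, inner_smul_left, inner_smul_right, conj_trivial]
  ring

lemma ee_deriv {n : ℕ} {s : ℝ} {d a b : ℝ → En n} {δ α β : En n} {t : ℝ} (hd : HasDerivAt d δ t)
    (ha : HasDerivAt a α t) (hb : HasDerivAt b β t) (d0 : d t ≠ 0) (a0 : ∀ r, a r ≠ 0) (b0 : b t ≠ 0) :
    HasDerivAt (fun r => ee s (d r) (a r) (b r)) (ed s (d t) (a t) (b t) δ α β) t := by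
  have e : (fun r => ee s (d r) (a r) (b r)) = fun r => (‖d r‖ ^ 2 - ⟪a r, d r⟫ ^ 2 * (‖a r‖ ^ 2)⁻¹) *
      ((‖d r‖ ^ s)⁻¹ ^ 2 * (‖a r‖ * ‖b r‖ / ‖d r‖)) := by
    ext r; unfold ee Wv; rw [Nv_sq _ _ (a0 r)]
  have pd : 0 < ‖d t‖ := norm_pos_iff.2 d0
  have pa : 0 < ‖a t‖ := norm_pos_iff.2 (a0 t)
  have pb : 0 < ‖b t‖ := norm_pos_iff.2 b0
  have ps : 0 < ‖d t‖ ^ s := by positivity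
  have hN := (hd.norm_sq).sub (((ha.inner ℝ hd).pow 2).mul (ha.norm_sq.inv (by positivity)))
  have hdn := hasDeriv_norm hd d0
  have hW := (((hdn.rpow_const (p := s) (Or.inl pd.ne')).inv ps.ne').pow 2).mul
    (((hasDeriv_norm ha (a0 t)).mul (hasDeriv_norm hb b0)).div hdn pd.ne')
  have h := hN.mul hW
  rw [e]
  refine h.congr_deriv ?_
  unfold ed
  rw [Nv_sq _ _ (a0 t), Nv_inner]
  unfold Wv
  have es : ‖d t‖ ^ (s - 1) = ‖d t‖ ^ s / ‖d t‖ := Real.rpow_sub_one pd.ne' s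
  simp only [es, Pi.pow_apply, Pi.mul_apply, Pi.inv_apply, Pi.div_apply, Pi.sub_apply]
  rw [real_inner_comm (α) (d t)]
  clear h hN hW e
  generalize ‖d t‖ ^ s = D at *
  have hD : D ≠ 0 := ps.ne'
  norm_num only [pow_one, Nat.cast_ofNat]
  field_simp
  ring

lemma time_abs {n : ℕ} {s : ℝ} (hs : 3 / 2 < s) {d a b δ α β : ℝ → En n}
    (cd : Continuous d) (ca : Continuous a) (cb : Continuous b)
    (cδ : Continuous δ) (cα : Continuous α) (cβ : Continuous β)
    (d0 : ∀ t, d t ≠ 0) (a0 : ∀ t, a t ≠ 0) (b0 : ∀ t, b t ≠ 0)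
    (hd : ∀ t ∈ Ioo (0 : ℝ) 1, HasDerivAt d (δ t) t) (ha : ∀ t ∈ Ioo (0 : ℝ) 1, HasDerivAt a (α t) t)
    (hb : ∀ t ∈ Ioo (0 : ℝ) 1, HasDerivAt b (β t) t) :
    |√(ee s (d 1) (a 1) (b 1)) - √(ee s (d 0) (a 0) (b 0))| ≤
      √(1 + (2 * s + 1) / 4) * ∫ t in (0 : ℝ)..1, √(gg s (d t) (a t) (b t) (δ t) (α t) (β t)) := by
  have d1 : ∀ t, ‖d t‖ ≠ 0 := fun t => norm_ne_zero_iff.2 (d0 t)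
  have a1 : ∀ t, ‖a t‖ ≠ 0 := fun t => norm_ne_zero_iff.2 (a0 t)
  have b1 : ∀ t, ‖b t‖ ≠ 0 := fun t => norm_ne_zero_iff.2 (b0 t)
  have a2 : ∀ t, ‖a t‖ ^ 2 ≠ 0 := fun t => pow_ne_zero _ (a1 t)
  have b2 : ∀ t, ‖b t‖ ^ 2 ≠ 0 := fun t => pow_ne_zero _ (b1 t)
  have d2 : ∀ t, ‖d t‖ ^ 2 ≠ 0 := fun t => pow_ne_zero _ (d1 t)
  have d3 : ∀ t, ‖d t‖ ^ s ≠ 0 := fun t =>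
    (Real.rpow_pos_of_pos (norm_pos_iff.2 (d0 t)) s).ne'
  have cds : Continuous fun t => ‖d t‖ ^ s := cd.norm.rpow_const fun t => Or.inl (d1 t)
  have cW : Continuous fun t => Wv s (d t) (a t) (b t) := by
    unfold Wv
    exact ((cds.inv₀ d3).pow 2).mul ((ca.norm.mul cb.norm).div cd.norm d1)
  have cco : Continuous fun t => (‖a t‖ ^ 2)⁻¹ * ⟪a t, d t⟫ :=
    ((ca.norm.pow 2).inv₀ a2).mul (ca.inner cd)
  have ce : Continuous fun t => ee s (d t) (a t) (b t) := by
    unfold ee Nv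
    exact ((cd.sub (cco.smul ca)).norm.pow 2).mul cW
  have cg : Continuous fun t => gg s (d t) (a t) (b t) (δ t) (α t) (β t) := by
    unfold gg g1 g2 g3 Nv
    refine ((continuous_const.mul ?_).add (continuous_const.mul ?_)).add ?_
    · exact ((cδ.sub (cco.smul cα)).norm.pow 2).mul cW
    · exact ce.mul ((cδ.norm.pow 2).div (cd.norm.pow 2) d2)
    · exact ce.mul (((cα.norm.pow 2).div (ca.norm.pow 2) a2).add ((cβ.norm.pow 2).div (cb.norm.pow 2) b2))
  set e : ℝ → ℝ := fun t => ee s (d t) (a t) (b t) with he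
  set g : ℝ → ℝ := fun t => gg s (d t) (a t) (b t) (δ t) (α t) (β t) with hg
  set k := √(1 + (2 * s + 1) / 4) with hk
  have hp : 0 ≤ 1 + (2 * s + 1) / 4 := by linarith
  have e0 : ∀ t, 0 ≤ e t := fun t => ee_nonneg _ _ _ _
  have g0 : ∀ t, 0 ≤ g t := fun t => gg_nonneg hs _ _ _ _ _ _
  have main : ∀ ε > 0, |√(e 1 + ε) - √(e 0 + ε)| ≤ k * ∫ t in (0 : ℝ)..1, √(g t) := by
    intro ε hε
    have cf : Continuous fun t => √(e t + ε) := (ce.add continuous_const).sqrt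
    set f' : ℝ → ℝ := fun t => ed s (d t) (a t) (b t) (δ t) (α t) (β t) / (2 * √(e t + ε)) with hf'
    have hf : ∀ t ∈ Ioo (0 : ℝ) 1, HasDerivAt (fun t => √(e t + ε)) (f' t) t := fun t ht => by
      have := (ee_deriv (s := s) (hd t ht) (ha t ht) (hb t ht) (d0 t) a0 (b0 t)).add_const ε
      exact this.sqrt (by have := e0 t; positivity)
    have hbd : ∀ t, |f' t| ≤ k * √(g t) := fun t => by
      have hpos : 0 < e t + ε := by have := e0 t; positivity
      have h1 := ed_sq_le hs (d t) (a t) (b t) (δ t) (α t) (β t)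
      rw [hk, ← Real.sqrt_mul hp]
      apply Real.abs_le_sqrt
      rw [hf']
      simp only
      rw [div_pow, mul_pow, Real.sq_sqrt hpos.le, div_le_iff₀ (by positivity)]
      refine h1.trans ?_
      change (4 + (2 * s + 1)) * e t * g t ≤ _
      have : 0 ≤ (4 + (2 * s + 1)) * g t := mul_nonneg (by linarith) (g0 t)
      nlinarith
    have int : IntegrableOn (fun t => k * √(g t)) (Icc 0 1) :=
      (continuous_const.mul cg.sqrt).continuousOn.integrableOn_Icc
    have u1 := intervalIntegral.sub_le_integral_of_hasDeriv_right_of_le zero_le_one cf.continuousOn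
      (fun t ht => (hf t ht).hasDerivWithinAt) int (fun t _ => (le_abs_self _).trans (hbd t))
    have u2 := intervalIntegral.sub_le_integral_of_hasDeriv_right_of_le zero_le_one cf.neg.continuousOn
      (fun t ht => (hf t ht).neg.hasDerivWithinAt) int (fun t _ => (neg_le_abs _).trans (hbd t))
    rw [intervalIntegral.integral_const_mul] at u1 u2
    simp only [Pi.neg_apply] at u2
    rw [abs_le]
    constructor <;> linarith
  have hl : Tendsto (fun ε : ℝ => |√(e 1 + ε) - √(e 0 + ε)|) (𝓝[>] 0) (𝓝 |√(e 1) - √(e 0)|) := by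
    have hc : Continuous fun ε : ℝ => |√(e 1 + ε) - √(e 0 + ε)| := by fun_prop
    have := (hc.tendsto 0).mono_left (nhdsWithin_le_nhds (s := Ioi 0))
    simpa using this
  exact le_of_tendsto hl (eventually_nhdsWithin_of_forall main)

/-- energy density along a path -/
def eP {n : ℕ} (s : ℝ) (A : ℝ → ℝ → En n) (t x y : ℝ) : ℝ :=
  ee s (A t y - A t x) (deriv (A t) x) (deriv (A t) y)
/-- metric density along a path -/
def gP {n : ℕ} (s : ℝ) (A U : ℝ → ℝ → En n) (t x y : ℝ) : ℝ :=
  gg s (A t y - A t x) (deriv (A t) x) (deriv (A t) y) (U t y - U t x) (deriv (U t) x) (deriv (U t) y)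

lemma time_path {n : ℕ} {s : ℝ} (hs : 3 / 2 < s) {A U : ℝ → ℝ → En n} (D : PData s A U) (x y : ℝ) :
    |√(eP s A 1 x y) - √(eP s A 0 x y)| ≤
      √(1 + (2 * s + 1) / 4) * ∫ t in (0 : ℝ)..1, √(gP s A U t x y) := by
  by_cases h : ∃ t, A t y = A t x
  · obtain ⟨t, ht⟩ := h
    obtain ⟨k, hk⟩ := inj_int (D.mA t).1.1 (D.mA t).2.1 ht
    have e : ∀ r, A r y - A r x = 0 := fun r => by
      have := (D.mA r).1.1.int_mul k x
      rw [mul_one] at this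
      rw [hk, this, sub_self]
    have e2 : ∀ r, eP s A r x y = 0 := fun r => by
      unfold eP ee Nv; rw [e]; simp
    rw [e2, e2, sub_self, abs_zero]
    exact mul_nonneg (Real.sqrt_nonneg _)
      (intervalIntegral.integral_nonneg zero_le_one fun _ _ => Real.sqrt_nonneg _)
  · push Not at h
    have sA : ∀ z, Continuous fun t => A t z := fun z =>
      D.cA.comp (f := fun t : ℝ => (t, z)) (by fun_prop)
    have sA1 : ∀ z, Continuous fun t => deriv (A t) z := fun z =>
      D.cA1.comp (f := fun t : ℝ => (t, z)) (by fun_prop)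
    have sU : ∀ z, Continuous fun t => U t z := fun z =>
      D.cU.comp (f := fun t : ℝ => (t, z)) (by fun_prop)
    have sU1 : ∀ z, Continuous fun t => deriv (U t) z := fun z =>
      D.cU1.comp (f := fun t : ℝ => (t, z)) (by fun_prop)
    unfold eP gP
    exact time_abs hs (d := fun t => A t y - A t x) (a := fun t => deriv (A t) x)
      (b := fun t => deriv (A t) y) (δ := fun t => U t y - U t x) (α := fun t => deriv (U t) x)
      (β := fun t => deriv (U t) y) ((sA y).sub (sA x)) (sA1 x) (sA1 y)
      ((sU y).sub (sU x)) (sU1 x) (sU1 y)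
      (fun t => sub_ne_zero.2 (h t)) (fun t => (D.mA t).2.2 x) (fun t => (D.mA t).2.2 y)
      (fun t ht => (D.tA t ht y).sub (D.tA t ht x)) (fun t ht => D.tA1 t ht x) (fun t ht => D.tA1 t ht y)

lemma ee_meas {n : ℕ} {T : Type*} [MeasurableSpace T] (s : ℝ) {d a b : T → En n} (hd : Measurable d)
    (ha : Measurable a) (hb : Measurable b) : Measurable fun t => ee s (d t) (a t) (b t) := by
  unfold ee Nv Wv
  fun_prop

lemma g1_meas {n : ℕ} {T : Type*} [MeasurableSpace T] (s : ℝ) {d a b δ α : T → En n} (hd : Measurable d)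
    (ha : Measurable a) (hb : Measurable b) (hδ : Measurable δ) (hα : Measurable α) :
    Measurable fun t => g1 s (d t) (a t) (b t) (δ t) (α t) := by
  unfold g1 Nv Wv
  fun_prop

lemma g2_meas {n : ℕ} {T : Type*} [MeasurableSpace T] (s : ℝ) {d a b δ : T → En n} (hd : Measurable d)
    (ha : Measurable a) (hb : Measurable b) (hδ : Measurable δ) :
    Measurable fun t => g2 s (d t) (a t) (b t) (δ t) := by
  have := ee_meas s hd ha hb
  unfold g2
  fun_prop

lemma g3_meas {n : ℕ} {T : Type*} [MeasurableSpace T] (s : ℝ) {d a b α β : T → En n} (hd : Measurable d)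
    (ha : Measurable a) (hb : Measurable b) (hα : Measurable α) (hβ : Measurable β) :
    Measurable fun t => g3 s (d t) (a t) (b t) (α t) (β t) := by
  have := ee_meas s hd ha hb
  unfold g3
  fun_prop

/-- product measure on the square -/
abbrev ζ2 : Measure (ℝ × ℝ) := (volume.restrict I01).prod (volume.restrict I01)

lemma lint_prod {f : ℝ × ℝ → ℝ≥0∞} (hf : Measurable f) :
    ∫⁻ z, f z ∂ζ2 = ∫⁻ x in I01, ∫⁻ y in I01, f (x, y) :=
  lintegral_prod _ hf.aemeasurable

lemma int2_eq {f : ℝ × ℝ → ℝ} (hf : Measurable f) (h0 : ∀ z, 0 ≤ f z)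
    (hfin : ∫⁻ z, ENNReal.ofReal (f z) ∂ζ2 < ⊤) :
    ∫ x in I01, ∫ y in I01, f (x, y) = (∫⁻ z, ENNReal.ofReal (f z) ∂ζ2).toReal := by
  have hm : Measurable fun z => ENNReal.ofReal (f z) := hf.ennreal_ofReal
  rw [lint_prod hm] at hfin ⊢
  have hm2 : Measurable fun x => ∫⁻ y in I01, ENNReal.ofReal (f (x, y)) := hm.lintegral_prod_right'
  rw [← integral_toReal hm2.aemeasurable (ae_lt_top hm2 hfin.ne)]
  congr 1
  ext1 x
  exact integral_eq_lintegral_of_nonneg_ae (Eventually.of_forall fun y => h0 _)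
    (hf.comp measurable_prodMk_left).aestronglyMeasurable

lemma minkowski {Z : Type*} [MeasurableSpace Z] (ζ : Measure Z) [SFinite ζ] {h : ℝ × Z → ℝ≥0∞}
    (hm : Measurable h) (hfin : ∫⁻ z, (∫⁻ t in I01, h (t, z)) ^ 2 ∂ζ ≠ ⊤) :
    (∫⁻ z, (∫⁻ t in I01, h (t, z)) ^ 2 ∂ζ) ^ (1 / 2 : ℝ) ≤
      ∫⁻ t in I01, (∫⁻ z, h (t, z) ^ 2 ∂ζ) ^ (1 / 2 : ℝ) := by
  set F : Z → ℝ≥0∞ := fun z => ∫⁻ t in I01, h (t, z) with hF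
  have hFm : Measurable F := hm.lintegral_prod_left'
  set X := ∫⁻ z, F z ^ 2 ∂ζ with hX
  rcases eq_or_ne X 0 with h0 | h0
  · rw [h0, ENNReal.zero_rpow_of_pos (by norm_num)]; exact zero_le
  have h1 : X = ∫⁻ t in I01, ∫⁻ z, h (t, z) * F z ∂ζ := by
    have e : ∀ z, F z ^ 2 = ∫⁻ t in I01, h (t, z) * F z := fun z => by
      have hz : Measurable fun t => h (t, z) := hm.comp measurable_prodMk_right
      rw [lintegral_mul_const _ hz, sq]
    rw [hX]
    simp_rw [e]
    rw [lintegral_lintegral_swap]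
    exact ((hm.comp measurable_swap).mul (hFm.comp measurable_fst)).aemeasurable
  have h2 : X ≤ (∫⁻ t in I01, (∫⁻ z, h (t, z) ^ 2 ∂ζ) ^ (1 / 2 : ℝ)) * X ^ (1 / 2 : ℝ) := by
    have hm2 : Measurable fun t => ∫⁻ z, h (t, z) ^ 2 ∂ζ := (hm.pow_const 2).lintegral_prod_right'
    rw [← lintegral_mul_const _ (hm2.pow_const _)]
    conv_lhs => rw [h1]
    refine lintegral_mono fun t => ?_
    exact lint_cs ζ _ _ (hm.comp measurable_prodMk_left).aemeasurable hFm.aemeasurable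
  have hx0 : X ^ (1 / 2 : ℝ) ≠ 0 := by
    intro h
    rw [ENNReal.rpow_eq_zero_iff] at h
    rcases h with h | h
    · exact h0 h.1
    · norm_num at h
  have hxt : X ^ (1 / 2 : ℝ) ≠ ⊤ := ENNReal.rpow_ne_top_of_nonneg (by norm_num) hfin
  have hXX : X = X ^ (1 / 2 : ℝ) * X ^ (1 / 2 : ℝ) := by
    rw [← ENNReal.rpow_add _ _ h0 hfin]; norm_num
  rw [← ENNReal.mul_le_mul_iff_left hx0 hxt, ← hXX]
  exact h2

lemma id1 {n : ℕ} (s : ℝ) (γ u : ℝ → En n) (x y : ℝ) :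
    ⟪Rop s γ u x y, Rop s γ u x y⟫ * muW γ x y =
      g1 s (γ y - γ x) (deriv γ x) (deriv γ y) (u y - u x) (deriv u x) := by
  rw [real_inner_self_eq_norm_sq, Rop_eq]; rfl

lemma ide {n : ℕ} (s : ℝ) (γ : ℝ → En n) (x y : ℝ) :
    ‖Rop s γ γ x y‖ ^ 2 * muW γ x y = ee s (γ y - γ x) (deriv γ x) (deriv γ y) := by
  rw [Rop_eq]; rfl

lemma id2 {n : ℕ} (s : ℝ) (γ u : ℝ → En n) (x y : ℝ) :
    ‖Rop s γ γ x y‖ ^ 2 * (⟪u y - u x, u y - u x⟫ / ‖γ y - γ x‖ ^ 2) * muW γ x y =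
      g2 s (γ y - γ x) (deriv γ x) (deriv γ y) (u y - u x) := by
  rw [mul_right_comm, ide, real_inner_self_eq_norm_sq]; rfl

lemma Dg_sq {n : ℕ} (γ u : ℝ → En n) (x : ℝ) :
    ⟪Dg γ u x, Dg γ u x⟫ = ‖deriv u x‖ ^ 2 / ‖deriv γ x‖ ^ 2 := by
  rw [real_inner_self_eq_norm_sq, Dg, norm_smul, norm_inv, norm_norm, mul_pow, inv_pow]
  ring

lemma id3 {n : ℕ} (s : ℝ) (γ u : ℝ → En n) (x y : ℝ) :
    ‖Rop s γ γ x y‖ ^ 2 * (⟪Dg γ u x, Dg γ u x⟫ + ⟪Dg γ u y, Dg γ u y⟫) * muW γ x y =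
      g3 s (γ y - γ x) (deriv γ x) (deriv γ y) (deriv u x) (deriv u y) := by
  rw [mul_right_comm, ide, Dg_sq, Dg_sq]; rfl

/-- densities as functions on the square -/
def eZ {n : ℕ} (s : ℝ) (γ : ℝ → En n) (z : ℝ × ℝ) : ℝ :=
  ee s (γ z.2 - γ z.1) (deriv γ z.1) (deriv γ z.2)
/-- first density -/
def z1 {n : ℕ} (s : ℝ) (γ u : ℝ → En n) (z : ℝ × ℝ) : ℝ :=
  g1 s (γ z.2 - γ z.1) (deriv γ z.1) (deriv γ z.2) (u z.2 - u z.1) (deriv u z.1)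
/-- second density -/
def z2 {n : ℕ} (s : ℝ) (γ u : ℝ → En n) (z : ℝ × ℝ) : ℝ :=
  g2 s (γ z.2 - γ z.1) (deriv γ z.1) (deriv γ z.2) (u z.2 - u z.1)
/-- third density -/
def z3 {n : ℕ} (s : ℝ) (γ u : ℝ → En n) (z : ℝ × ℝ) : ℝ :=
  g3 s (γ z.2 - γ z.1) (deriv γ z.1) (deriv γ z.2) (deriv u z.1) (deriv u z.2)

lemma zmeas {n : ℕ} {s : ℝ} {A U : ℝ → ℝ → En n} (D : PData s A U) :
    (Measurable fun q : ℝ × (ℝ × ℝ) => eZ s (A q.1) q.2) ∧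
    (Measurable fun q : ℝ × (ℝ × ℝ) => z1 s (A q.1) (U q.1) q.2) ∧
    (Measurable fun q : ℝ × (ℝ × ℝ) => z2 s (A q.1) (U q.1) q.2) ∧
    (Measurable fun q : ℝ × (ℝ × ℝ) => z3 s (A q.1) (U q.1) q.2) := by
  have c1 : Continuous fun q : ℝ × (ℝ × ℝ) => ((q.1, q.2.1) : ℝ × ℝ) := by fun_prop
  have c2 : Continuous fun q : ℝ × (ℝ × ℝ) => ((q.1, q.2.2) : ℝ × ℝ) := by fun_prop
  have md : Measurable fun q : ℝ × (ℝ × ℝ) => A q.1 q.2.2 - A q.1 q.2.1 :=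
    ((D.cA.comp c2).sub (D.cA.comp c1)).measurable
  have mδ : Measurable fun q : ℝ × (ℝ × ℝ) => U q.1 q.2.2 - U q.1 q.2.1 :=
    ((D.cU.comp c2).sub (D.cU.comp c1)).measurable
  have ma : Measurable fun q : ℝ × (ℝ × ℝ) => deriv (A q.1) q.2.1 := (D.cA1.comp c1).measurable
  have mb : Measurable fun q : ℝ × (ℝ × ℝ) => deriv (A q.1) q.2.2 := (D.cA1.comp c2).measurable
  have mα : Measurable fun q : ℝ × (ℝ × ℝ) => deriv (U q.1) q.2.1 := (D.cU1.comp c1).measurable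
  have mβ : Measurable fun q : ℝ × (ℝ × ℝ) => deriv (U q.1) q.2.2 := (D.cU1.comp c2).measurable
  exact ⟨ee_meas s md ma mb, g1_meas s md ma mb mδ mα, g2_meas s md ma mb mδ,
    g3_meas s md ma mb mα mβ⟩

lemma ratio_le {n : ℕ} {s c K : ℝ} {γ u : ℝ → En n} (Q : QReg s c K γ) (hu : InHs s u)
    (hL : ∀ x, ‖deriv u x‖ ≤ K) (x y : ℝ) : ‖u y - u x‖ ^ 2 / ‖γ y - γ x‖ ^ 2 ≤ (K / c) ^ 2 := by
  obtain ⟨w, hw, k, rfl⟩ := exists_w x y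
  have e : ∀ v : ℝ → En n, Function.Periodic v 1 → v (x + w + k) = v (x + w) := fun v hv => by
    have := hv.int_mul k (x + w)
    rwa [mul_one] at this
  rw [e u hu.1, e γ Q.mem.1, ← div_pow]
  have hc := Q.cpos
  have hK : 0 ≤ K := (norm_nonneg _).trans (Q.hi 0)
  rcases eq_or_ne w 0 with rfl | hw0
  · simp; positivity
  have hwp : 0 < |w| := abs_pos.2 hw0
  have h1 := Q.bl x w hw
  have h2 := lip_of_deriv hu hL x (x + w)
  rw [add_sub_cancel_left] at h2
  have h3 : 0 < ‖γ (x + w) - γ x‖ := (by positivity : 0 < c * |w|).trans_le h1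
  refine pow_le_pow_left₀ (by positivity) ?_ 2
  rw [div_le_div_iff₀ h3 hc]
  calc ‖u (x + w) - u x‖ * c ≤ K * |w| * c := by gcongr
    _ = K * (c * |w|) := by ring
    _ ≤ _ := by gcongr

lemma dratio_le {n : ℕ} {s c K : ℝ} {γ u : ℝ → En n} (Q : QReg s c K γ)
    (hL : ∀ x, ‖deriv u x‖ ≤ K) (x : ℝ) : ‖deriv u x‖ ^ 2 / ‖deriv γ x‖ ^ 2 ≤ (K / c) ^ 2 := by
  have hc := Q.cpos
  have hK : 0 ≤ K := (norm_nonneg _).trans (Q.hi 0)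
  rw [← div_pow]
  gcongr
  · exact hL x
  · exact Q.lo x

lemma prob_int_le {f : ℝ → ℝ} {C : ℝ} (h0 : ∀ x, 0 ≤ f x) (hC : ∀ x, f x ≤ C) :
    0 ≤ ∫ x in I01, f x ∧ ∫ x in I01, f x ≤ C := by
  refine ⟨integral_nonneg h0, ?_⟩
  have := norm_integral_le_of_norm_le_const (μ := volume.restrict I01) (f := f) (C := C)
    (Eventually.of_forall fun x => by rw [Real.norm_of_nonneg (h0 x)]; exact hC x)
  simp only [probReal_univ, mul_one] at this
  exact (le_abs_self _).trans this

lemma meas_sliceR {β : Type*} [MeasurableSpace β] {F : ℝ × β → ℝ} (h : Measurable F) (x : ℝ) :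
    Measurable fun w => F (x, w) := h.comp measurable_prodMk_left

lemma unif {n : ℕ} {s : ℝ} (hs : 3 / 2 < s) {A U : ℝ → ℝ → En n} (D : PData s A U) :
    ∃ C : ℝ, 0 ≤ C ∧ ∀ t ∈ Icc (0 : ℝ) 1,
      ∫⁻ z, ENNReal.ofReal (eZ s (A t) z) ∂ζ2 ≤ ENNReal.ofReal C ∧
      ∫⁻ z, ENNReal.ofReal (z1 s (A t) (U t) z) ∂ζ2 ≤ ENNReal.ofReal C ∧
      ∫⁻ z, ENNReal.ofReal (z2 s (A t) (U t) z) ∂ζ2 ≤ ENNReal.ofReal C ∧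
      ∫⁻ z, ENNReal.ofReal (z3 s (A t) (U t) z) ∂ζ2 ≤ ENNReal.ofReal C ∧
      (0 ≤ innerH1g (A t) (U t) (U t) ∧ innerH1g (A t) (U t) (U t) ≤ C) ∧
      (0 ≤ innerL2g (A t) (U t) (U t) ∧ innerL2g (A t) (U t) (U t) ≤ C) := by
  obtain ⟨c, hc, hbl⟩ := unif_bilip D
  obtain ⟨K0, hK0, hbd⟩ := D.bd
  have hck := cK_pos hs
  set K := cK s * K0 with hK
  have hK00 : 0 ≤ K := by positivity
  set C0 := kC s c K K * (K0 ^ 2 + K0 ^ 2) with hC0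
  have hkC : 0 ≤ kC s c K K := by unfold kC; positivity
  have hC00 : 0 ≤ C0 := by positivity
  set q := (K / c) ^ 2 with hq
  have hq0 : 0 ≤ q := by positivity
  refine ⟨C0 + C0 * q + C0 * (q + q) + q * K + K ^ 2 * K, by positivity, fun t ht => ?_⟩
  set C := C0 + C0 * q + C0 * (q + q) + q * K + K ^ 2 * K with hC
  have t1 : 0 ≤ C0 * q := by positivity
  have t2 : 0 ≤ C0 * (q + q) := by positivity
  have t3 : 0 ≤ q * K := by positivity
  have t4 : 0 ≤ K ^ 2 * K := by positivity
  have hA := (D.mA t).1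
  have hU := D.mU t
  have bA : ∀ x, ‖deriv (A t) x‖ ≤ K := fun x =>
    (deriv_le_Hs hs hA x).trans (mul_le_mul_of_nonneg_left (hbd t).1 hck.le)
  have bU : ∀ x, ‖deriv (U t) x‖ ≤ K := fun x =>
    (deriv_le_Hs hs hU x).trans (mul_le_mul_of_nonneg_left (hbd t).2 hck.le)
  have bU0 : ∀ x, ‖U t x‖ ≤ K := fun x =>
    (le_Hs hs hU x).trans (mul_le_mul_of_nonneg_left (hbd t).2 hck.le)
  have Q : QReg s c K (A t) := ⟨hA, hc, (hbl t ht).1, (hbl t ht).2, bA⟩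
  have gA : gagliardoSqE (s - 1) (deriv (A t)) ≤ ENNReal.ofReal (K0 ^ 2) :=
    (gag_le_HsNorm hA).trans (ENNReal.ofReal_le_ofReal
      (pow_le_pow_left₀ (HsNorm_nonneg _ _) (hbd t).1 2))
  have gU : gagliardoSqE (s - 1) (deriv (U t)) ≤ ENNReal.ofReal (K0 ^ 2) :=
    (gag_le_HsNorm hU).trans (ENNReal.ofReal_le_ofReal
      (pow_le_pow_left₀ (HsNorm_nonneg _ _) (hbd t).2 2))
  obtain ⟨m0, m1, m2, m3⟩ := zmeas D
  have m0' : Measurable fun z => eZ s (A t) z := meas_sliceR m0 t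
  have m1' : Measurable fun z => z1 s (A t) (U t) z := meas_sliceR m1 t
  have fin : ENNReal.ofReal (kC s c K K) * (ENNReal.ofReal (K0 ^ 2) + ENNReal.ofReal (K0 ^ 2)) =
      ENNReal.ofReal C0 := by
    rw [← ENNReal.ofReal_add (by positivity) (by positivity), ← ENNReal.ofReal_mul hkC]
  have hE : ∫⁻ z, ENNReal.ofReal (eZ s (A t) z) ∂ζ2 ≤ ENNReal.ofReal C0 := by
    rw [lint_prod m0'.ennreal_ofReal, ← fin]
    have h := key_R hs Q hA bA
    simp only [ide] at h
    refine le_trans h ?_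
    gcongr
  have h1 : ∫⁻ z, ENNReal.ofReal (z1 s (A t) (U t) z) ∂ζ2 ≤ ENNReal.ofReal C0 := by
    rw [lint_prod m1'.ennreal_ofReal, ← fin]
    have h := key_R hs Q hU bU
    simp only [← real_inner_self_eq_norm_sq, id1] at h
    refine le_trans h ?_
    gcongr
  have hmul : ∀ (f : ℝ × ℝ → ℝ) (r : ℝ), 0 ≤ r → (∀ z, f z ≤ r * eZ s (A t) z) →
      ∫⁻ z, ENNReal.ofReal (f z) ∂ζ2 ≤ ENNReal.ofReal (C0 * r) := fun f r hr hf => by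
    rw [mul_comm, ENNReal.ofReal_mul hr]
    calc _ ≤ ∫⁻ z, ENNReal.ofReal r * ENNReal.ofReal (eZ s (A t) z) ∂ζ2 := by
          refine lintegral_mono fun z => ?_
          rw [← ENNReal.ofReal_mul hr]
          exact ENNReal.ofReal_le_ofReal (hf z)
      _ = ENNReal.ofReal r * ∫⁻ z, ENNReal.ofReal (eZ s (A t) z) ∂ζ2 :=
          lintegral_const_mul' _ _ ENNReal.ofReal_ne_top
      _ ≤ _ := by gcongr
  have h2 := hmul (z2 s (A t) (U t)) q hq0 fun z => by
    rw [mul_comm]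
    exact mul_le_mul_of_nonneg_left (ratio_le Q hU bU _ _) (ee_nonneg _ _ _ _)
  have h3 := hmul (z3 s (A t) (U t)) (q + q) (by positivity) fun z => by
    rw [mul_comm]
    exact mul_le_mul_of_nonneg_left (add_le_add (dratio_le Q bU _) (dratio_le Q bU _))
      (ee_nonneg _ _ _ _)
  have h4 := prob_int_le (f := fun x => ⟪Dg (A t) (U t) x, Dg (A t) (U t) x⟫ * ‖deriv (A t) x‖)
    (C := q * K) (fun x => by rw [real_inner_self_eq_norm_sq]; positivity)
    (fun x => by rw [Dg_sq]; exact mul_le_mul (dratio_le Q bU x) (bA x) (norm_nonneg _) hq0)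
  have h5 := prob_int_le (f := fun x => ⟪U t x, U t x⟫ * ‖deriv (A t) x‖)
    (C := K ^ 2 * K) (fun x => by rw [real_inner_self_eq_norm_sq]; positivity)
    (fun x => by
      rw [real_inner_self_eq_norm_sq]
      exact mul_le_mul (pow_le_pow_left₀ (norm_nonneg _) (bU0 x) 2) (bA x) (norm_nonneg _) (by positivity))
  refine ⟨hE.trans (ENNReal.ofReal_le_ofReal ?_), h1.trans (ENNReal.ofReal_le_ofReal ?_),
    h2.trans (ENNReal.ofReal_le_ofReal ?_), h3.trans (ENNReal.ofReal_le_ofReal ?_),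
    ⟨h4.1, h4.2.trans ?_⟩, ⟨h5.1, h5.2.trans ?_⟩⟩ <;> linarith

lemma l2_tri {Z : Type*} [MeasurableSpace Z] (ζ : Measure Z) {f g h : Z → ℝ≥0∞} (k : ℝ≥0∞) (hk : k ≠ ⊤)
    (hg : Measurable g) (hh : Measurable h) (hle : ∀ z, f z ≤ g z + k * h z) :
    (∫⁻ z, f z ^ 2 ∂ζ) ^ (1 / 2 : ℝ) ≤ (∫⁻ z, g z ^ 2 ∂ζ) ^ (1 / 2 : ℝ) +
      k * (∫⁻ z, h z ^ 2 ∂ζ) ^ (1 / 2 : ℝ) := by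
  have h1 := ENNReal.lintegral_Lp_add_le (μ := ζ) (p := 2) hg.aemeasurable (hh.const_mul k).aemeasurable
    (by norm_num)
  simp only [Pi.add_apply, ENNReal.rpow_two] at h1
  calc _ ≤ (∫⁻ z, (g z + k * h z) ^ 2 ∂ζ) ^ (1 / 2 : ℝ) := by
        gcongr with z
        exact hle z
    _ ≤ _ := h1
    _ = _ := by
        congr 1
        simp_rw [mul_pow]
        rw [lintegral_const_mul' _ _ (ENNReal.pow_ne_top hk), ENNReal.mul_rpow_of_nonneg _ _ (by norm_num),
          ← ENNReal.rpow_two, ← ENNReal.rpow_mul]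
        norm_num

lemma ofReal_sqrt_sq {a : ℝ} (ha : 0 ≤ a) : ENNReal.ofReal (√a) ^ 2 = ENNReal.ofReal a := by
  rw [← ENNReal.ofReal_pow (Real.sqrt_nonneg _), Real.sq_sqrt ha]

/-- metric density on the square -/
def gZ {n : ℕ} (s : ℝ) (γ u : ℝ → En n) (z : ℝ × ℝ) : ℝ :=
  2 * z1 s γ u z + (2 * s + 1) * z2 s γ u z + z3 s γ u z

lemma gZ_meas {n : ℕ} {s : ℝ} {A U : ℝ → ℝ → En n} (D : PData s A U) :
    Measurable fun q : ℝ × (ℝ × ℝ) => gZ s (A q.1) (U q.1) q.2 := by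
  obtain ⟨m0, m1, m2, m3⟩ := zmeas D
  exact ((m1.const_mul 2).add (m2.const_mul (2 * s + 1))).add m3

lemma lp_ineq {n : ℕ} {s : ℝ} (hs : 3 / 2 < s) {A U : ℝ → ℝ → En n} (D : PData s A U)
    {C : ℝ≥0∞} (hC : C ≠ ⊤) (hfin : ∀ t ∈ Icc (0 : ℝ) 1, ∫⁻ z, ENNReal.ofReal (gZ s (A t) (U t) z) ∂ζ2 ≤ C)
    {i j : ℝ} (hij : (i = 0 ∧ j = 1) ∨ (i = 1 ∧ j = 0)) :
    (∫⁻ z, ENNReal.ofReal (eZ s (A i) z) ∂ζ2) ^ (1 / 2 : ℝ) ≤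
      (∫⁻ z, ENNReal.ofReal (eZ s (A j) z) ∂ζ2) ^ (1 / 2 : ℝ) +
      ENNReal.ofReal (√(1 + (2 * s + 1) / 4)) *
        ∫⁻ t in I01, (∫⁻ z, ENNReal.ofReal (gZ s (A t) (U t) z) ∂ζ2) ^ (1 / 2 : ℝ) := by
  have m0 := (zmeas D).1
  have mg := gZ_meas D
  have g0 : ∀ t z, 0 ≤ gZ s (A t) (U t) z := fun t z => gg_nonneg hs _ _ _ _ _ _
  have e0 : ∀ t z, 0 ≤ eZ s (A t) z := fun t z => ee_nonneg _ _ _ _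
  have mh : Measurable fun q : ℝ × (ℝ × ℝ) => ENNReal.ofReal (√(gZ s (A q.1) (U q.1) q.2)) :=
    mg.sqrt.ennreal_ofReal
  have mH : Measurable fun z => ∫⁻ t in I01, ENNReal.ofReal (√(gZ s (A t) (U t) z)) :=
    mh.lintegral_prod_left'
  have mj : Measurable fun z => ENNReal.ofReal (√(eZ s (A j) z)) :=
    (meas_sliceR m0 j).sqrt.ennreal_ofReal
  have hfinal : ∫⁻ z, (∫⁻ t in I01, ENNReal.ofReal (√(gZ s (A t) (U t) z))) ^ 2 ∂ζ2 ≠ ⊤ := by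
    refine ne_top_of_le_ne_top hC ?_
    calc _ ≤ ∫⁻ z, (∫⁻ t in I01, ENNReal.ofReal (√(gZ s (A t) (U t) z)) ^ 2) ∂ζ2 := by
          refine lintegral_mono fun z => lint_sq_le _ vol_I01'.le _ ?_
          exact (mh.comp measurable_prodMk_right).aemeasurable
      _ = ∫⁻ t in I01, ∫⁻ z, ENNReal.ofReal (√(gZ s (A t) (U t) z)) ^ 2 ∂ζ2 := by
          rw [lintegral_lintegral_swap]
          exact ((mh.comp measurable_swap).pow_const 2).aemeasurable
      _ ≤ ∫⁻ t in I01, C := by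
          refine setLIntegral_mono' meas_I01 fun t ht => ?_
          simp_rw [ofReal_sqrt_sq (g0 _ _)]
          exact hfin t (Ico_subset_Icc_self ht)
      _ = C := by rw [lintegral_const, measure_univ, mul_one]
  have key : ∀ z, ENNReal.ofReal (√(eZ s (A i) z)) ≤ ENNReal.ofReal (√(eZ s (A j) z)) +
      ENNReal.ofReal (√(1 + (2 * s + 1) / 4)) *
        ∫⁻ t in I01, ENNReal.ofReal (√(gZ s (A t) (U t) z)) := fun z => by
    have h1 := time_path hs D z.1 z.2
    change |√(eZ s (A 1) z) - √(eZ s (A 0) z)| ≤ √(1 + (2 * s + 1) / 4) *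
      ∫ t in (0 : ℝ)..1, √(gZ s (A t) (U t) z) at h1
    have mz : Measurable fun t => √(gZ s (A t) (U t) z) :=
      (mg.comp (measurable_prodMk_right (y := z))).sqrt
    have h2 : ENNReal.ofReal (∫ t in (0 : ℝ)..1, √(gZ s (A t) (U t) z)) ≤
        ∫⁻ t in I01, ENNReal.ofReal (√(gZ s (A t) (U t) z)) := by
      rw [intervalIntegral.integral_of_le zero_le_one, ← integral_Ico_eq_integral_Ioc,
        integral_eq_lintegral_of_nonneg_ae (Eventually.of_forall fun t => Real.sqrt_nonneg _)
          mz.aestronglyMeasurable]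
      exact ENNReal.ofReal_toReal_le
    have h3 : √(eZ s (A i) z) ≤ √(eZ s (A j) z) + √(1 + (2 * s + 1) / 4) *
      ∫ t in (0 : ℝ)..1, √(gZ s (A t) (U t) z) := by
      obtain ⟨a, b⟩ := abs_le.1 h1
      rcases hij with ⟨rfl, rfl⟩ | ⟨rfl, rfl⟩ <;> linarith
    have hi0 : 0 ≤ ∫ t in (0 : ℝ)..1, √(gZ s (A t) (U t) z) :=
      intervalIntegral.integral_nonneg zero_le_one fun _ _ => Real.sqrt_nonneg _
    refine (ENNReal.ofReal_le_ofReal h3).trans ?_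
    rw [ENNReal.ofReal_add (Real.sqrt_nonneg _) (by positivity), ENNReal.ofReal_mul (Real.sqrt_nonneg _)]
    gcongr
  have h1 := l2_tri ζ2 _ ENNReal.ofReal_ne_top mj mH key
  have h2 := minkowski ζ2 mh hfinal
  simp_rw [ofReal_sqrt_sq (e0 _ _)] at h1
  simp_rw [ofReal_sqrt_sq (g0 _ _)] at h2
  refine h1.trans ?_
  gcongr

lemma G_split {n : ℕ} {s : ℝ} (hs : 3 / 2 < s) {A U : ℝ → ℝ → En n} (D : PData s A U) {C t : ℝ}
    (hC : 0 ≤ C)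
    (h1 : ∫⁻ z, ENNReal.ofReal (z1 s (A t) (U t) z) ∂ζ2 ≤ ENNReal.ofReal C)
    (h2 : ∫⁻ z, ENNReal.ofReal (z2 s (A t) (U t) z) ∂ζ2 ≤ ENNReal.ofReal C)
    (h3 : ∫⁻ z, ENNReal.ofReal (z3 s (A t) (U t) z) ∂ζ2 ≤ ENNReal.ofReal C)
    (h4 : 0 ≤ innerH1g (A t) (U t) (U t) ∧ innerH1g (A t) (U t) (U t) ≤ C)
    (h5 : 0 ≤ innerL2g (A t) (U t) (U t) ∧ innerL2g (A t) (U t) (U t) ≤ C) :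
    ∫⁻ z, ENNReal.ofReal (gZ s (A t) (U t) z) ∂ζ2 ≤ ENNReal.ofReal (Gmet s (A t) (U t) (U t)) ∧
    Gmet s (A t) (U t) (U t) ≤ (2 * s + 6) * C := by
  obtain ⟨m0, m1, m2, m3⟩ := zmeas D
  have n1 : Measurable fun z => z1 s (A t) (U t) z := meas_sliceR m1 t
  have n2 : Measurable fun z => z2 s (A t) (U t) z := meas_sliceR m2 t
  have n3 : Measurable fun z => z3 s (A t) (U t) z := meas_sliceR m3 t
  have p1 : ∀ z, 0 ≤ z1 s (A t) (U t) z := fun z => g1_nonneg _ _ _ _ _ _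
  have p2 : ∀ z, 0 ≤ z2 s (A t) (U t) z := fun z => g2_nonneg _ _ _ _ _
  have p3 : ∀ z, 0 ≤ z3 s (A t) (U t) z := fun z => g3_nonneg _ _ _ _ _ _
  have b1 : B1 s (A t) (U t) (U t) = (∫⁻ z, ENNReal.ofReal (z1 s (A t) (U t) z) ∂ζ2).toReal := by
    rw [← int2_eq n1 p1 (h1.trans_lt ENNReal.ofReal_lt_top)]
    unfold B1
    simp only [id1]; rfl
  have b2 : B2 s (A t) (U t) (U t) = (∫⁻ z, ENNReal.ofReal (z2 s (A t) (U t) z) ∂ζ2).toReal := by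
    rw [← int2_eq n2 p2 (h2.trans_lt ENNReal.ofReal_lt_top)]
    unfold B2
    simp only [id2]; rfl
  have b3 : B3 s (A t) (U t) (U t) = (∫⁻ z, ENNReal.ofReal (z3 s (A t) (U t) z) ∂ζ2).toReal := by
    rw [← int2_eq n3 p3 (h3.trans_lt ENNReal.ofReal_lt_top)]
    unfold B3
    simp only [id3]; rfl
  have hp : 0 ≤ 2 * s + 1 := by linarith
  have hsum : ∫⁻ z, ENNReal.ofReal (gZ s (A t) (U t) z) ∂ζ2 =
      ENNReal.ofReal 2 * (∫⁻ z, ENNReal.ofReal (z1 s (A t) (U t) z) ∂ζ2) +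
      ENNReal.ofReal (2 * s + 1) * (∫⁻ z, ENNReal.ofReal (z2 s (A t) (U t) z) ∂ζ2) +
      ∫⁻ z, ENNReal.ofReal (z3 s (A t) (U t) z) ∂ζ2 := by
    rw [← lintegral_const_mul' _ _ ENNReal.ofReal_ne_top, ← lintegral_const_mul' _ _ ENNReal.ofReal_ne_top,
      ← lintegral_add_left (n1.ennreal_ofReal.const_mul _),
      ← lintegral_add_right _ n3.ennreal_ofReal]
    refine lintegral_congr fun z => ?_
    have q1 := p1 z
    have q2 := p2 z
    have q3 := p3 z
    unfold gZ
    rw [ENNReal.ofReal_add (by positivity) q3, ENNReal.ofReal_add (by positivity) (by positivity),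
      ENNReal.ofReal_mul (by norm_num), ENNReal.ofReal_mul hp]
  have r1 := ENNReal.toReal_le_of_le_ofReal hC h1
  have r2 := ENNReal.toReal_le_of_le_ofReal hC h2
  have r3 := ENNReal.toReal_le_of_le_ofReal hC h3
  have f1 := ENNReal.ofReal_toReal (h1.trans_lt ENNReal.ofReal_lt_top).ne
  have f2 := ENNReal.ofReal_toReal (h2.trans_lt ENNReal.ofReal_lt_top).ne
  have f3 := ENNReal.ofReal_toReal (h3.trans_lt ENNReal.ofReal_lt_top).ne
  rw [← b1] at r1 f1
  rw [← b2] at r2 f2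
  rw [← b3] at r3 f3
  have c1 : 0 ≤ B1 s (A t) (U t) (U t) := by rw [b1]; exact ENNReal.toReal_nonneg
  have c2 : 0 ≤ B2 s (A t) (U t) (U t) := by rw [b2]; exact ENNReal.toReal_nonneg
  have c3 : 0 ≤ B3 s (A t) (U t) (U t) := by rw [b3]; exact ENNReal.toReal_nonneg
  constructor
  · rw [hsum, ← f1, ← f2, ← f3, ← ENNReal.ofReal_mul (by norm_num), ← ENNReal.ofReal_mul hp,
      ← ENNReal.ofReal_add (by positivity) (by positivity),
      ← ENNReal.ofReal_add (by positivity) (by positivity)]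
    apply ENNReal.ofReal_le_ofReal
    unfold Gmet
    linarith [h4.1, h5.1]
  · unfold Gmet
    have := mul_le_mul_of_nonneg_left r2 hp
    linarith [h4.2, h5.2]

lemma G_meas {n : ℕ} {s : ℝ} {A U : ℝ → ℝ → En n} (D : PData s A U) :
    StronglyMeasurable fun t => Gmet s (A t) (U t) (U t) := by
  obtain ⟨m0, m1, m2, m3⟩ := zmeas D
  have two : ∀ f : ℝ × (ℝ × ℝ) → ℝ, Measurable f →
      StronglyMeasurable fun t => ∫ x in I01, ∫ y in I01, f (t, (x, y)) := fun f hf => by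
    have h1 : Measurable fun q : (ℝ × ℝ) × ℝ => f (q.1.1, (q.1.2, q.2)) :=
      hf.comp (f := fun q : (ℝ × ℝ) × ℝ => (q.1.1, (q.1.2, q.2))) (by fun_prop)
    have h2 : StronglyMeasurable fun q : ℝ × ℝ => ∫ y in I01, f (q.1, (q.2, y)) :=
      h1.stronglyMeasurable.integral_prod_right'
    exact h2.integral_prod_right'
  have b1 : StronglyMeasurable fun t => B1 s (A t) (U t) (U t) := by
    have := two _ m1
    unfold B1
    simp only [id1]; exact this
  have b2 : StronglyMeasurable fun t => B2 s (A t) (U t) (U t) := by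
    have := two _ m2
    unfold B2
    simp only [id2]; exact this
  have b3 : StronglyMeasurable fun t => B3 s (A t) (U t) (U t) := by
    have := two _ m3
    unfold B3
    simp only [id3]; exact this
  have k1 := D.cA1.measurable
  have k2 := D.cU1.measurable
  have k3 := D.cU.measurable
  have b4 : StronglyMeasurable fun t => innerH1g (A t) (U t) (U t) := by
    have h : Measurable fun q : ℝ × ℝ => ‖deriv (U q.1) q.2‖ ^ 2 / ‖deriv (A q.1) q.2‖ ^ 2 *
        ‖deriv (A q.1) q.2‖ := ((k2.norm.pow_const 2).div (k1.norm.pow_const 2)).mul k1.norm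
    unfold innerH1g
    simp only [Dg_sq]
    exact h.stronglyMeasurable.integral_prod_right'
  have b5 : StronglyMeasurable fun t => innerL2g (A t) (U t) (U t) := by
    have h : Measurable fun q : ℝ × ℝ => ‖U q.1 q.2‖ ^ 2 * ‖deriv (A q.1) q.2‖ :=
      (k3.norm.pow_const 2).mul k1.norm
    unfold innerL2g
    simp only [real_inner_self_eq_norm_sq]
    exact h.stronglyMeasurable.integral_prod_right'
  unfold Gmet
  exact ((((b1.const_mul 2).add (b2.const_mul _)).add b3).add b4).add b5

lemma half_toReal (a : ℝ≥0∞) : (a ^ (1 / 2 : ℝ)).toReal = √a.toReal := by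
  rw [← ENNReal.toReal_rpow, Real.sqrt_eq_rpow]

lemma Etp_eq {n : ℕ} {s : ℝ} {A U : ℝ → ℝ → En n} (D : PData s A U) (t : ℝ) :
    Etp s (A t) = (∫⁻ z, ENNReal.ofReal (eZ s (A t) z) ∂ζ2).toReal := by
  have m : Measurable fun z => eZ s (A t) z := meas_sliceR (zmeas D).1 t
  rw [lint_prod m.ennreal_ofReal]
  unfold Etp EtpE
  simp only [ide]; rfl

lemma data_ineq {n : ℕ} {s : ℝ} (hs : 3 / 2 < s) {A U : ℝ → ℝ → En n} (D : PData s A U) :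
    |√(Etp s (A 0)) - √(Etp s (A 1))| ≤ √(1 + (2 * s + 1) / 4) *
      ∫ t in (0 : ℝ)..1, √(Gmet s (A t) (U t) (U t)) := by
  obtain ⟨C, hC, hu⟩ := unif hs D
  have hG : ∀ t ∈ Icc (0 : ℝ) 1, ∫⁻ z, ENNReal.ofReal (gZ s (A t) (U t) z) ∂ζ2 ≤
      ENNReal.ofReal (Gmet s (A t) (U t) (U t)) ∧
      Gmet s (A t) (U t) (U t) ≤ (2 * s + 6) * C := fun t ht => by
    obtain ⟨-, h1, h2, h3, h4, h5⟩ := hu t ht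
    exact G_split hs D hC h1 h2 h3 h4 h5
  have hint : Integrable (fun t => √(Gmet s (A t) (U t) (U t))) (volume.restrict I01) := by
    refine Integrable.of_bound (C := √((2 * s + 6) * C))
      (G_meas D).measurable.sqrt.aestronglyMeasurable ?_
    refine (ae_restrict_iff' meas_I01).2 (Eventually.of_forall fun t ht => ?_)
    rw [Real.norm_of_nonneg (Real.sqrt_nonneg _)]
    exact Real.sqrt_le_sqrt (hG t (Ico_subset_Icc_self ht)).2
  set k := √(1 + (2 * s + 1) / 4) with hk
  have hk0 : 0 ≤ k := Real.sqrt_nonneg _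
  set Len := ∫ t in (0 : ℝ)..1, √(Gmet s (A t) (U t) (U t)) with hLen
  have hLen0 : 0 ≤ Len := intervalIntegral.integral_nonneg zero_le_one fun _ _ => Real.sqrt_nonneg _
  have hI : ∫⁻ t in I01, (∫⁻ z, ENNReal.ofReal (gZ s (A t) (U t) z) ∂ζ2) ^ (1 / 2 : ℝ) ≤
      ENNReal.ofReal Len := by
    rw [hLen, intervalIntegral.integral_of_le zero_le_one, ← integral_Ico_eq_integral_Ioc,
      ← I01, ofReal_integral_eq_lintegral_ofReal hint (Eventually.of_forall fun t => Real.sqrt_nonneg _)]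
    refine setLIntegral_mono' meas_I01 fun t ht => ?_
    have h := (hG t (Ico_subset_Icc_self ht)).1
    calc _ ≤ ENNReal.ofReal (Gmet s (A t) (U t) (U t)) ^ (1 / 2 : ℝ) := by gcongr
      _ = _ := by
        rcases le_total 0 (Gmet s (A t) (U t) (U t)) with h0 | h0
        · rw [ENNReal.ofReal_rpow_of_nonneg h0 (by norm_num), Real.sqrt_eq_rpow]
        · rw [ENNReal.ofReal_of_nonpos h0, Real.sqrt_eq_zero_of_nonpos h0]; simp
  have fin : ∀ t ∈ Icc (0 : ℝ) 1, ∫⁻ z, ENNReal.ofReal (eZ s (A t) z) ∂ζ2 ≠ ⊤ := fun t ht =>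
    ((hu t ht).1.trans_lt ENNReal.ofReal_lt_top).ne
  have main : ∀ i j : ℝ, i ∈ Icc (0 : ℝ) 1 → j ∈ Icc (0 : ℝ) 1 → ((i = 0 ∧ j = 1) ∨ (i = 1 ∧ j = 0)) →
      √(Etp s (A i)) ≤ √(Etp s (A j)) + k * Len := fun i j hi hj hij => by
    have h := lp_ineq hs D (C := ENNReal.ofReal ((2 * s + 6) * C)) ENNReal.ofReal_ne_top
      (fun t ht => (hG t ht).1.trans (ENNReal.ofReal_le_ofReal (hG t ht).2)) hij
    have h' := h.trans (add_le_add_right (mul_le_mul_right hI _) _)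
    have tj := ENNReal.rpow_ne_top_of_nonneg (y := 1 / 2) (by norm_num) (fin j hj)
    rw [Etp_eq D, Etp_eq D, ← half_toReal, ← half_toReal]
    rw [← hk, ← ENNReal.ofReal_mul hk0] at h'
    have := ENNReal.toReal_mono (by finiteness) h'
    rwa [ENNReal.toReal_add tj ENNReal.ofReal_ne_top, ENNReal.toReal_ofReal (by positivity)] at this
  have i0 : (0 : ℝ) ∈ Icc (0 : ℝ) 1 := by simp
  have i1 : (1 : ℝ) ∈ Icc (0 : ℝ) 1 := by simp
  have a := main 0 1 i0 i1 (by simp)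
  have b := main 1 0 i1 i0 (by simp)
  rw [abs_le]
  constructor <;> linarith

lemma path_ineq {n : ℕ} {s : ℝ} (hs : 3 / 2 < s) (P : C1Path s n) :
    |√(Etp s (P.Γ 0)) - √(Etp s (P.Γ 1))| ≤ √(1 + (2 * s + 1) / 4) * pathLen P := by
  have h := data_ineq hs (path_data hs P)
  beta_reduce at h
  rw [cl_eq (t := 0) (by simp), cl_eq (t := 1) (by simp)] at h
  refine h.trans_eq ?_
  congr 1
  unfold pathLen
  refine intervalIntegral.integral_congr fun t ht => ?_
  rw [uIcc_of_le zero_le_one] at ht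
  beta_reduce
  rw [cl_eq ht]

lemma lip_geod {n : ℕ} {s : ℝ} (hs : 3 / 2 < s) (γ₀ γ₁ : ℝ → En n) :
    ENNReal.ofReal |√(Etp s γ₁) - √(Etp s γ₀)| ≤
        ENNReal.ofReal (√(1 + (2 * s + 1) / 4)) * geodDist s γ₁ γ₀ := by
  have hk : 0 < √(1 + (2 * s + 1) / 4) := Real.sqrt_pos.2 (by linarith)
  set k := √(1 + (2 * s + 1) / 4) with hkk
  have hk0 : ENNReal.ofReal k ≠ 0 := (ENNReal.ofReal_pos.2 hk).ne'
  rw [mul_comm, ← ENNReal.div_le_iff_le_mul (Or.inl hk0) (Or.inl ENNReal.ofReal_ne_top)]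
  unfold geodDist
  refine le_iInf₂ fun P hP => ?_
  rw [ENNReal.div_le_iff_le_mul (Or.inl hk0) (Or.inl ENNReal.ofReal_ne_top), mul_comm,
    ← ENNReal.ofReal_mul hk.le]
  have h := path_ineq hs P
  rw [hP.1, hP.2] at h
  exact ENNReal.ofReal_le_ofReal h

lemma bdd_geod {n : ℕ} {s : ℝ} (hs : 3 / 2 < s) (U : Set (ℝ → En n)) (hU : GBounded s U) :
    ∃ M : ℝ, ∀ γ ∈ U, Etp s γ ≤ M := by
  obtain ⟨-, γ₀, -, R, hR⟩ := hU
  refine ⟨(√(Etp s γ₀) + √(1 + (2 * s + 1) / 4) * max R 0) ^ 2, fun γ hγ => ?_⟩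
  have h1 := lip_geod hs γ₀ γ
  have h2 : geodDist s γ γ₀ ≤ ENNReal.ofReal (max R 0) :=
    (hR γ hγ).trans (ENNReal.ofReal_le_ofReal (le_max_left _ _))
  have h3 := h1.trans (mul_le_mul_right h2 _)
  rw [← ENNReal.ofReal_mul (Real.sqrt_nonneg _),
    ENNReal.ofReal_le_ofReal_iff (by positivity)] at h3
  have h4 := (le_abs_self _).trans h3
  have h0 : 0 ≤ Etp s γ := ENNReal.toReal_nonneg
  rw [← Real.sq_sqrt h0]
  exact pow_le_pow_left₀ (Real.sqrt_nonneg _) (by linarith) 2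

/-- Lipschitz continuity of `√E`: with `p = 2s+1`, for all
`γ₀, γ₁ ∈ 𝓜` one has `|√(E(γ₁)) − √(E(γ₀))| ≤ √(1 + p/4) · d_G(γ₁,γ₀)`;
in particular `E` is bounded on every `G`-bounded subset of `𝓜`. -/
theorem statement10 (s : ℝ) (hs : s ∈ Set.Ioo (3 / 2 : ℝ) 2) (n : ℕ) (hn : 2 ≤ n) :
    (∀ γ₀ γ₁ : ℝ → En n, InM s γ₀ → InM s γ₁ →
      ENNReal.ofReal |Real.sqrt (Etp s γ₁) - Real.sqrt (Etp s γ₀)| ≤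
        ENNReal.ofReal (Real.sqrt (1 + (2 * s + 1) / 4)) * geodDist s γ₁ γ₀) ∧
    ∀ U : Set (ℝ → En n), GBounded s U → ∃ M : ℝ, ∀ γ ∈ U, Etp s γ ≤ M := by
  exact ⟨fun γ₀ γ₁ _ _ => lip_geod hs.1 γ₀ γ₁, fun U hU => bdd_geod hs.1 U hU⟩
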